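/- arXiv:1101.1856 — 2 statements merged into one kernel-verified Lean document; each statement's English description precedes it below -/
import Mathlib

section
/- In a one-dimensional metric space X, every path α : [0,1] → X is homotopic relative endpoints to a reduced path whose image is contained in the image of α; moreover, this reduced path is unique up to reparametrization of [0,1]. -/
open Set

/-- Covering dimension at most `n`. -/
def CovDimLE (X : Type*) [TopologicalSpace X] (n : ℕ) : Prop :=
  ∀ U : Set (Set X), U.Finite → (∀ u ∈ U, IsOpen u) → ⋃₀ U = Set.univ →
    ∃ V : Set (Set X), V.Finite ∧ (∀ v ∈ V, IsOpen v) ∧ ⋃₀ V = Set.univ ∧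
      (∀ v ∈ V, ∃ u ∈ U, v ⊆ u) ∧ ∀ x : X, {v ∈ V | x ∈ v}.ncard ≤ n + 1

/-- A path is reduced if it is constant or admits no nullhomotopic subloop. -/
def IsReducedPath {X : Type*} [TopologicalSpace X] {a b : X} (α : Path a b) : Prop :=
  (∀ t, α t = a) ∨
    ¬ ∃ (s t : ℝ) (hst : s < t) (_ : 0 ≤ s) (_ : t ≤ 1) (h : α.extend s = α.extend t),
      Path.Homotopic
        ((α.truncate s t).cast (by rw [min_eq_left hst.le]; exact h.symm) rfl)
        (Path.refl (α.extend t))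

/-! ### Part 1: stacks (reduced walks) -/

namespace OneDim

open Classical in
/-- One step of the free reduction machine: the stack is a reduced walk, the top is the current
letter. -/
noncomputable def stp {A : Type*} : List A → A → List A
  | [], v => [v]
  | [a], v => if v = a then [a] else [v, a]
  | a :: b :: l, v => if v = a then a :: b :: l else if v = b then b :: l else v :: a :: b :: l

/-- Reduced walks. -/
def Red {A : Type*} : List A → Prop
  | [] => True
  | [_] => True
  | a :: b :: l => a ≠ b ∧ l.head? ≠ some a ∧ Red (b :: l)

variable {A : Type*}

lemma red_tail {a : A} {l : List A} (h : Red (a :: l)) : Red l := by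
  cases l with
  | nil => trivial
  | cons b l => exact h.2.2

lemma stp_head (l : List A) (v : A) : (stp l v).head? = some v := by
  match l with
  | [] => simp [stp]
  | [a] => simp only [stp]; split_ifs with h <;> simp [h]
  | a :: b :: l => simp only [stp]; split_ifs with h h' <;> simp [*]

lemma stp_ne_nil (l : List A) (v : A) : stp l v ≠ [] := by
  intro h
  have := stp_head l v
  simp [h] at this

/-- the three possible outcomes -/
lemma stp_cases (l : List A) (v : A) (hl : l ≠ []) :
    (stp l v = l ∧ l.head? = some v) ∨ (∃ a, l = a :: stp l v) ∨ stp l v = v :: l := by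
  match l with
  | [] => exact absurd rfl hl
  | [a] => simp only [stp]; split_ifs with h <;> simp [h]
  | a :: b :: l => simp only [stp]; split_ifs with h h' <;> simp [*]

lemma stp_self (l : List A) (v : A) (h : l.head? = some v) : stp l v = l := by
  match l with
  | [] => simp at h
  | [a] => simp at h; simp [stp, h]
  | a :: b :: l => simp at h; simp [stp, h]

lemma stp_red (l : List A) (v : A) (h : Red l) : Red (stp l v) := by
  match l with
  | [] => simp [stp, Red]
  | [a] => simp only [stp]; split_ifs with h <;> simp [h, Red]
  | a :: b :: l =>
    simp only [stp]; split_ifs with h1 h2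
    · exact h
    · exact h.2.2
    · exact ⟨h1, by simpa using fun h => h2 h.symm, h⟩

lemma stp_back (l : List A) (x y : A) (h : Red l) (hx : l.head? = some x) :
    stp (stp l y) x = l := by
  by_cases hxy : y = x
  · subst hxy; rw [stp_self l y hx, stp_self l y hx]
  match l with
  | [] => simp at hx
  | [a] =>
    simp at hx; subst hx
    simp [stp, hxy, Ne.symm hxy]
  | [a, b] =>
    simp at hx; subst hx
    have := h.1
    by_cases h2 : y = b
    · subst h2; simp [stp, hxy, Ne.symm hxy]
    · simp [stp, hxy, Ne.symm hxy, h2]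
  | a :: b :: d :: l =>
    simp at hx; subst hx
    have h3 := h.1
    have h4 : a ≠ d := by
      have := h.2.1; simp at this; exact fun h => this h.symm
    by_cases h2 : y = b
    · subst h2; simp [stp, hxy, Ne.symm hxy, h4]
    · simp [stp, hxy, Ne.symm hxy, h2]

lemma stp_tri (l : List A) (x y z : A) (h : Red l) (hx : l.head? = some x)
    (hc : x = y ∨ y = z ∨ x = z) : stp (stp l y) z = stp l z := by
  rcases hc with rfl | rfl | rfl
  · rw [stp_self l x hx]
  · rw [stp_self _ y (stp_head l y)]
  · rw [stp_back l x y h hx, stp_self l x hx]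

/-- Run the machine along a sequence of letters. -/
noncomputable def run (l : List A) (x : ℕ → A) : ℕ → List A
  | 0 => l
  | i + 1 => stp (run l x i) (x (i + 1))

lemma run_red (l : List A) (x : ℕ → A) (h : Red l) (i : ℕ) : Red (run l x i) := by
  induction i with
  | zero => exact h
  | succ i ih => exact stp_red _ _ ih

lemma run_head (l : List A) (x : ℕ → A) (h : l.head? = some (x 0)) (i : ℕ) :
    (run l x i).head? = some (x i) := by
  cases i with
  | zero => exact h
  | succ i => exact stp_head _ _

lemma run_const (l : List A) (x : ℕ → A) (h : l.head? = some (x 0)) (N : ℕ)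
    (hx : ∀ i ≤ N, x i = x 0) : ∀ i ≤ N, run l x i = l := by
  intro i hi
  induction i with
  | zero => rfl
  | succ i ih =>
    simp only [run]
    rw [ih (by omega), hx _ hi, stp_self _ _ h]

lemma run_row (l : List A) (x x' : ℕ → A) (N : ℕ) (hr : Red l) (hh : l.head? = some (x 0))
    (h1 : ∀ i < N, x i = x' i ∨ x' i = x' (i + 1) ∨ x i = x' (i + 1))
    (h2 : ∀ i < N, x i = x (i + 1) ∨ x (i + 1) = x' (i + 1) ∨ x i = x' (i + 1)) :
    ∀ i ≤ N, run (stp l (x' 0)) x' i = stp (run l x i) (x' i) := by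
  intro i hi
  induction i with
  | zero => rfl
  | succ i ih =>
    simp only [run]
    rw [ih (by omega)]
    rw [stp_tri _ (x i) _ _ (run_red l x hr i) (run_head l x hh i) (h1 i (by omega)),
      stp_tri _ (x i) _ _ (run_red l x hr i) (run_head l x hh i) (h2 i (by omega))]

/-! ### Part 2: approximating a one-dimensional space -/

/-- labels -/
structure Lab {X : Type*} [MetricSpace X] (K : Set X) (ε : ℝ) (c : X → X) : Prop where
  near : ∀ x ∈ K, dist x (c x) < ε
  two : ∀ K' : Set X, IsCompact K' → ∃ r > 0, ∀ x ∈ K', ∀ y ∈ K', ∀ z ∈ K',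
    dist x y < r → dist y z < r → dist x z < r → c x = c y ∨ c y = c z ∨ c x = c z

lemma exists_lab {X : Type*} [MetricSpace X] [Nonempty X] (hdim : CovDimLE X 1) (K : Set X) (hK : IsCompact K)
    (ε : ℝ) (hε : 0 < ε) : ∃ c : X → X, Lab K ε c := by
  obtain ⟨T, hTK, hTf, hT⟩ := hK.finite_cover_balls (e := ε / 2) (by linarith)
  obtain ⟨V, hVf, hVo, hVc, hVr, hVm⟩ := hdim (insert Kᶜ ((fun x => Metric.ball x (ε / 2)) '' T))
    ((hTf.image _).insert _) (by
      rintro u (rfl | ⟨x, _, rfl⟩)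
      · exact hK.isClosed.isOpen_compl
      · exact Metric.isOpen_ball) (by
      rw [eq_univ_iff_forall]
      intro x
      by_cases hx : x ∈ K
      · have := hT hx
        simp only [mem_iUnion] at this
        obtain ⟨y, hy, hxy⟩ := this
        exact ⟨_, Or.inr ⟨y, hy, rfl⟩, hxy⟩
      · exact ⟨_, Or.inl rfl, hx⟩)
  have hne : ∀ x : X, V.Nonempty := by
    intro x
    have : x ∈ ⋃₀ V := by rw [hVc]; trivial
    obtain ⟨v, hv, _⟩ := this
    exact ⟨v, hv⟩
  have hmax : ∀ x : X, ∃ v ∈ V, ∀ w ∈ V, Metric.infEDist x wᶜ ≤ Metric.infEDist x vᶜ := by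
    intro x
    exact Set.exists_max_image V (fun v => Metric.infEDist x vᶜ) hVf (hne x)
  choose g hgV hg using hmax
  have hrep : ∀ v : Set X, ∃ p : X, ∀ x ∈ v ∩ K, p ∈ v := by
    intro v
    by_cases h : (v ∩ K).Nonempty
    · obtain ⟨p, hp⟩ := h; exact ⟨p, fun _ _ => hp.1⟩
    · exact ⟨Classical.arbitrary X, fun x hx => absurd ⟨x, hx⟩ h⟩
  choose p hp using hrep
  have key : ∀ x y : X, ∀ r > 0, (∃ v ∈ V, Metric.ball x r ⊆ v) → dist x y < r → y ∈ g x := by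
    rintro x y r hr ⟨v, hv, hb⟩ hxy
    by_contra hy
    have h1 : Metric.infEDist x (g x)ᶜ ≤ edist x y := Metric.infEDist_le_edist_of_mem hy
    have h2 : ENNReal.ofReal r ≤ Metric.infEDist x vᶜ := by
      apply Metric.le_infEDist.2
      intro z hz
      by_contra hlt
      apply hz
      apply hb
      rw [not_le, edist_lt_ofReal] at hlt
      rwa [Metric.mem_ball, dist_comm]
    have h3 := (h2.trans (hg x v hv)).trans h1
    have : edist x y < ENNReal.ofReal r := edist_lt_ofReal.2 hxy
    exact absurd this (not_lt.2 h3)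
  have leb : ∀ K' : Set X, IsCompact K' → ∃ r > 0, ∀ x ∈ K', ∃ v ∈ V, Metric.ball x r ⊆ v :=
    fun K' hK' => lebesgue_number_lemma_of_metric_sUnion hK' hVo (by rw [hVc]; exact subset_univ _)
  refine ⟨fun x => p (g x), ?_, ?_⟩
  · intro x hx
    obtain ⟨r, hr, hr'⟩ := leb {x} isCompact_singleton
    have hxg : x ∈ g x := key x x r hr (hr' x rfl) (by simpa using hr)
    have hpg := hp (g x) x ⟨hxg, hx⟩
    obtain ⟨u, hu, hgu⟩ := hVr _ (hgV x)
    rcases hu with rfl | ⟨y, hy, rfl⟩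
    · exact absurd hx (hgu hxg)
    · have h1 := hgu hxg
      have h2 := hgu hpg
      simp only [Metric.mem_ball] at h1 h2
      have := dist_triangle_right x (p (g x)) y
      linarith
  · intro K' hK'
    obtain ⟨r, hr, hr'⟩ := leb K' hK'
    refine ⟨r, hr, ?_⟩
    intro x hx y hy z hz hxy hyz hxz
    have h1 : x ∈ g x := key x x r hr (hr' x hx) (by simpa using hr)
    have h2 : x ∈ g y := key y x r hr (hr' y hy) (by rwa [dist_comm])
    have h3 : x ∈ g z := key z x r hr (hr' z hz) (by rwa [dist_comm])
    by_contra hcon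
    push Not at hcon
    have hcard := hVm x
    have hsub : ({g x, g y, g z} : Set (Set X)) ⊆ {v ∈ V | x ∈ v} := by
      rintro v (rfl | rfl | rfl)
      exacts [⟨hgV _, h1⟩, ⟨hgV _, h2⟩, ⟨hgV _, h3⟩]
    have hle := Set.ncard_le_ncard hsub (hVf.subset (fun v hv => hv.1))
    have h3 : ({g x, g y, g z} : Set (Set X)).ncard = 3 := by
      rw [Set.ncard_eq_three]
      exact ⟨_, _, _, fun h => hcon.1 (by rw [h]), fun h => hcon.2.2 (by rw [h]),
        fun h => hcon.2.1 (by rw [h]), rfl⟩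
    omega

end OneDim

/-! ### Part 3: lifts of paths to stacks -/

namespace OneDim

set_option linter.unusedSectionVars false

variable {X : Type*} [MetricSpace X]

/-- A stack valued lift of a path. -/
structure IsLift (c : X → X) (f : ℝ → X) (S : ℝ → List X) (δ : ℝ) : Prop where
  pos : 0 < δ
  head : ∀ t ∈ Icc (0 : ℝ) 1, (S t).head? = some (c (f t))
  red : ∀ t ∈ Icc (0 : ℝ) 1, Red (S t)
  step : ∀ s ∈ Icc (0 : ℝ) 1, ∀ t ∈ Icc (0 : ℝ) 1, |s - t| < δ → S t = stp (S s) (c (f t))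

lemma IsLift.reverse {c : X → X} {f : ℝ → X} {S : ℝ → List X} {δ : ℝ} (h : IsLift c f S δ) :
    IsLift c (fun t => f (1 - t)) (fun t => S (1 - t)) δ where
  pos := h.pos
  head t ht := h.head _ ⟨by linarith [ht.2], by linarith [ht.1]⟩
  red t ht := h.red _ ⟨by linarith [ht.2], by linarith [ht.1]⟩
  step s hs t ht hst := h.step _ ⟨by linarith [hs.2], by linarith [hs.1]⟩ _
    ⟨by linarith [ht.2], by linarith [ht.1]⟩ (by
      rw [abs_lt] at *; constructor <;> linarith [hst.1, hst.2])

lemma exists_lift {c : X → X} {f : ℝ → X} (hf : Continuous f) {ε : ℝ}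
    (hc : Lab (f '' Icc 0 1) ε c) : ∃ S δ, IsLift c f S δ ∧ S 0 = [c (f 0)] := by
  obtain ⟨r, hr, htri⟩ := hc.two _ (isCompact_Icc.image hf)
  have huc := (isCompact_Icc (a := (0 : ℝ)) (b := 1)).uniformContinuousOn_of_continuous
    hf.continuousOn
  rw [Metric.uniformContinuousOn_iff] at huc
  obtain ⟨δ, hδ, hd⟩ := huc r hr
  obtain ⟨n, hn⟩ := exists_nat_one_div_lt (half_pos hδ)
  set N : ℕ := n + 1 with hN
  have hN0 : (0 : ℝ) < N := by positivity
  have hn' : 1 / (N : ℝ) < δ / 2 := by rw [hN]; push_cast; exact hn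
  set x : ℝ → ℕ → X := fun t i => c (f (min ((i : ℝ) / N) t)) with hx
  have hmem : ∀ t ∈ Icc (0 : ℝ) 1, ∀ i : ℕ, min ((i : ℝ) / N) t ∈ Icc (0 : ℝ) 1 := fun t ht i =>
    ⟨le_min (by positivity) ht.1, (min_le_right _ _).trans ht.2⟩
  have hx0 : ∀ t ∈ Icc (0 : ℝ) 1, x t 0 = c (f 0) := by
    intro t ht; simp [hx, ht.1]
  have hxN : ∀ t ∈ Icc (0 : ℝ) 1, x t N = c (f t) := by
    intro t ht
    simp only [hx]; rw [div_self hN0.ne', min_eq_right ht.2]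
  have hred : Red [c (f 0)] := trivial
  have hstep : ∀ i : ℕ, ((i + 1 : ℕ) : ℝ) / N = i / N + 1 / N := by
    intro i; push_cast; ring
  have hh : 0 < 1 / (N : ℝ) := by positivity
  have hcl : ∀ a a' b b' : ℝ, |a - a'| ≤ 1 / N → |b - b'| < δ / 2 →
      dist (min a b) (min a' b') < δ := fun a a' b b' h1 h2 => by
    rw [Real.dist_eq]
    refine (abs_min_sub_min_le_max a b a' b').trans_lt (max_lt ?_ ?_) <;> linarith
  refine ⟨fun t => run [c (f 0)] (x t) N, δ / 2, ⟨half_pos hδ, ?_, ?_, ?_⟩, ?_⟩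
  · intro t ht
    rw [run_head _ _ (by rw [hx0 t ht]; rfl), hxN t ht]
  · intro t ht
    exact run_red _ _ hred _
  · intro s hs t ht hst
    have hrow := run_row [c (f 0)] (x s) (x t) N hred (by rw [hx0 s hs]; rfl) ?_ ?_ N le_rfl
    · rw [hx0 t ht, stp_self _ _ rfl, hxN t ht] at hrow
      exact hrow
    all_goals
      intro i hi
      have e1 : |(i : ℝ) / N - ((i + 1 : ℕ) : ℝ) / N| ≤ 1 / N := by
        rw [hstep i, show (i : ℝ) / N - (i / N + 1 / N) = -(1 / N) by ring, abs_neg,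
          abs_of_nonneg hh.le]
      have e0 : ∀ a : ℝ, |a - a| ≤ 1 / (N : ℝ) := fun a => by simpa using hh.le
      have z0 : ∀ a : ℝ, |a - a| < δ / 2 := fun a => by simpa using half_pos hδ
    · exact htri _ (mem_image_of_mem f (hmem _ hs _)) _ (mem_image_of_mem f (hmem _ ht _)) _
        (mem_image_of_mem f (hmem _ ht _))
        (hd _ (hmem _ hs _) _ (hmem _ ht _) (hcl _ _ _ _ (e0 _) hst))
        (hd _ (hmem _ ht _) _ (hmem _ ht _) (hcl _ _ _ _ e1 (z0 _)))
        (hd _ (hmem _ hs _) _ (hmem _ ht _) (hcl _ _ _ _ e1 hst))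
    · exact htri _ (mem_image_of_mem f (hmem _ hs _)) _ (mem_image_of_mem f (hmem _ hs _)) _
        (mem_image_of_mem f (hmem _ ht _))
        (hd _ (hmem _ hs _) _ (hmem _ hs _) (hcl _ _ _ _ e1 (z0 _)))
        (hd _ (hmem _ hs _) _ (hmem _ ht _) (hcl _ _ _ _ (e0 _) hst))
        (hd _ (hmem _ hs _) _ (hmem _ ht _) (hcl _ _ _ _ e1 hst))
  · exact run_const _ _ (by rw [hx0 0 (by simp)]; rfl) N (fun i _ => by
      rw [hx0 0 (by simp)]
      simp only [hx]; rw [min_eq_right (by positivity)]) N le_rfl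

/-- grid points -/
noncomputable def gp (N i : ℕ) : unitInterval := Set.projIcc 0 1 zero_le_one ((i : ℝ) / N)

lemma gp_zero (N : ℕ) : gp N 0 = 0 := by
  simp [gp]

lemma gp_top (N : ℕ) (hN : 0 < N) : gp N N = 1 := by
  have : (N : ℝ) ≠ 0 := by positivity
  simp [gp, div_self this]

lemma gp_dist (N i : ℕ) : dist (gp N i) (gp N (i + 1)) ≤ 1 / N := by
  have h := (LipschitzWith.projIcc (zero_le_one (α := ℝ))).dist_le_mul ((i : ℝ) / N)
    (((i + 1 : ℕ) : ℝ) / N)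
  refine h.trans ?_
  have : (i : ℝ) / N - ((i + 1 : ℕ) : ℝ) / N = - (1 / N) := by push_cast; ring
  rw [Real.dist_eq, this, abs_neg, abs_of_nonneg (by positivity)]
  simp

lemma lift_null {c : X → X} {f : ℝ → X} {S : ℝ → List X} {δ ε : ℝ} {K : Set X}
    (hc : Lab K ε c) (h : IsLift c f S δ) (p : unitInterval → unitInterval) (hp : Continuous p)
    (G : unitInterval × unitInterval → X) (hG : Continuous G) (x₀ : X)
    (h0 : ∀ τ, G (0, τ) = f (p τ)) (h1 : ∀ τ, G (1, τ) = x₀) (hl : ∀ u, G (u, 0) = x₀)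
    (hr : ∀ u, G (u, 1) = x₀) : S (p 0) = S (p 1) := by
  obtain ⟨r, hr0, htri⟩ := hc.two _ (isCompact_range hG)
  have huc := CompactSpace.uniformContinuous_of_continuous hG
  have hup := CompactSpace.uniformContinuous_of_continuous hp
  rw [Metric.uniformContinuous_iff] at huc hup
  obtain ⟨δ₁, hδ₁, hd₁⟩ := huc r hr0
  obtain ⟨δ₂, hδ₂, hd₂⟩ := hup δ h.pos
  obtain ⟨n, hn⟩ := exists_nat_one_div_lt (lt_min hδ₁ hδ₂)
  set N : ℕ := n + 1 with hN
  have hn' : 1 / (N : ℝ) < min δ₁ δ₂ := by rw [hN]; push_cast; exact hn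
  have hn1 : 1 / (N : ℝ) < δ₁ := hn'.trans_le (min_le_left _ _)
  have hn2 : 1 / (N : ℝ) < δ₂ := hn'.trans_le (min_le_right _ _)
  have hNpos : 0 < N := by omega
  set l := S (p 0) with hldef
  set x : ℕ → ℕ → X := fun j i => c (G (gp N j, gp N i)) with hx
  have hx0 : ∀ j, x j 0 = c x₀ := fun j => by simp only [hx]; rw [gp_zero, hl]
  have hxN : ∀ j, x j N = c x₀ := fun j => by simp only [hx]; rw [gp_top N hNpos, hr]
  have hlh : l.head? = some (c x₀) := by
    rw [hldef, h.head _ (p 0).2, ← h0, hl]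
  have hlr : Red l := h.red _ (p 0).2
  have rows : ∀ j, run l (x (j + 1)) N = run l (x j) N := by
    intro j
    have hrow := run_row l (x j) (x (j + 1)) N hlr (by rw [hx0, hlh]) ?_ ?_ N le_rfl
    · rw [hx0, stp_self l _ hlh, hxN, stp_self (run l (x j) N)] at hrow
      · exact hrow
      · rw [run_head _ _ (by rw [hx0, hlh]), hxN]
    all_goals
      intro i hi
      have a1 := (gp_dist N i).trans_lt hn1
      have a2 := (gp_dist N j).trans_lt hn1
      apply htri _ (mem_range_self _) _ (mem_range_self _) _ (mem_range_self _) <;>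
        apply hd₁ <;> rw [Prod.dist_eq] <;> apply max_lt <;> simpa using by assumption
  have rowtop : run l (x N) N = l := by
    apply run_const _ _ (by rw [hx0, hlh]) N _ N le_rfl
    intro i _
    rw [hx0]; simp only [hx]; rw [gp_top N hNpos, h1]
  have rowall : ∀ j, run l (x j) N = run l (x 0) N := by
    intro j
    induction j with
    | zero => rfl
    | succ j ih => rw [rows, ih]
  have row0 : ∀ i, run l (x 0) i = S (p (gp N i)) := by
    intro i
    induction i with
    | zero => rw [gp_zero]; rfl
    | succ i ih =>
      simp only [run]
      rw [ih, h.step _ (p (gp N i)).2 _ (p (gp N (i + 1))).2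
        (hd₂ ((gp_dist N i).trans_lt hn2))]
      simp only [hx]
      rw [gp_zero, h0]
  rw [← rowtop, rowall, row0, gp_top N hNpos]

lemma lift_ext {c : X → X} {f : ℝ → X} {S : ℝ → List X} {δ : ℝ} (h : IsLift c f S δ) {r t : ℝ}
    (hr : 0 ≤ r) (hrt : r ≤ t) (ht : t ≤ 1)
    (hmin : ∀ τ ∈ Icc r t, (S r).length ≤ (S τ).length) :
    ∃ Ts : List ℝ, S t = Ts.map (fun τ => c (f τ)) ++ S r ∧ Ts.Pairwise (· ≥ ·) ∧
      ∀ τ ∈ Ts, τ ∈ Icc r t := by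
  have key : ∀ k : ℕ, ∀ s ∈ Icc r t, s ≤ r + k * (δ / 2) →
      ∃ Ts : List ℝ, S s = Ts.map (fun τ => c (f τ)) ++ S r ∧ Ts.Pairwise (· ≥ ·) ∧
      ∀ τ ∈ Ts, τ ∈ Icc r s := by
    intro k
    induction k with
    | zero =>
      intro s hs hs'
      have : s = r := le_antisymm (by simpa using hs') hs.1
      subst this
      exact ⟨[], by simp, List.Pairwise.nil, by simp⟩
    | succ k ih =>
      intro s hs hs'
      have hδ := h.pos
      set s' := max r (s - δ / 2) with hs'def
      have hs's : s' ≤ s := max_le hs.1 (by linarith)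
      have hrs' : r ≤ s' := le_max_left _ _
      obtain ⟨Ts, h1, h2, h3⟩ := ih s' ⟨hrs', hs's.trans hs.2⟩ (by
        apply max_le
        · have : 0 ≤ (k : ℝ) * (δ / 2) := by positivity
          linarith
        · push_cast at hs'; linarith)
      have m1 : s' ∈ Icc (0 : ℝ) 1 := ⟨hr.trans hrs', (hs's.trans hs.2).trans ht⟩
      have m2 : s ∈ Icc (0 : ℝ) 1 := ⟨hr.trans hs.1, hs.2.trans ht⟩
      have hst := h.step s' m1 s m2 (by
        rw [abs_lt]; constructor
        · have := le_max_right r (s - δ / 2); linarith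
        · linarith)
      have hne : S s' ≠ [] := by
        intro he; have := h.head s' m1; simp [he] at this
      rcases stp_cases (S s') (c (f s)) hne with ⟨hA, _⟩ | ⟨a, hA⟩ | hA
      · rw [← hst] at hA
        exact ⟨Ts, by rw [hA, h1], h2, fun τ hτ => ⟨(h3 τ hτ).1, (h3 τ hτ).2.trans hs's⟩⟩
      · rw [← hst] at hA
        cases Ts with
        | nil =>
          exfalso
          have := hmin s hs
          rw [h1] at hA
          simp at hA
          rw [hA] at this
          simp at this
        | cons τ Ts =>
          rw [h1] at hA
          simp at hA
          refine ⟨Ts, hA.2.symm, (List.pairwise_cons.1 h2).2, fun τ' hτ => ?_⟩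
          have := h3 τ' (List.mem_cons_of_mem _ hτ)
          exact ⟨this.1, this.2.trans hs's⟩
      · rw [← hst] at hA
        refine ⟨s :: Ts, by rw [hA, h1]; simp, List.pairwise_cons.2 ⟨?_, h2⟩, ?_⟩
        · intro τ hτ; exact (h3 τ hτ).2.trans hs's
        · intro τ hτ
          rcases List.mem_cons.1 hτ with rfl | hτ
          · exact ⟨hs.1, le_rfl⟩
          · exact ⟨(h3 τ hτ).1, (h3 τ hτ).2.trans hs's⟩
  obtain ⟨k, hk⟩ := exists_nat_ge ((t - r) / (δ / 2))
  have hδ := h.pos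
  rw [div_le_iff₀ (by linarith)] at hk
  exact key k t ⟨hrt, le_rfl⟩ (by linarith)

/-! ### Part 4: the variation functional on stacks -/

/-- best chain cost starting from `p` -/
noncomputable def W (θ : X → X → ℝ) : X → List X → ℝ
  | _, [] => 0
  | p, q :: l => max (W θ p l) (θ p q + W θ q l)

/-- height of a stack -/
noncomputable def hgt (θ : X → X → ℝ) : List X → ℝ
  | [] => 0
  | a :: l => W θ a l

lemma W_nonneg (θ : X → X → ℝ) (p : X) (l : List X) : 0 ≤ W θ p l := by
  induction l with
  | nil => exact le_rfl
  | cons q l ih => exact ih.trans (le_max_left _ _)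

lemma hgt_nonneg (θ : X → X → ℝ) (l : List X) : 0 ≤ hgt θ l := by
  cases l with
  | nil => exact le_rfl
  | cons a l => exact W_nonneg _ _ _

lemma W_lip (θ : X → X → ℝ) (hθ : ∀ p p' q, θ p q ≤ θ p' q + dist p p') (p p' : X) (l : List X) :
    W θ p l ≤ W θ p' l + dist p p' := by
  induction l with
  | nil => simpa [W] using dist_nonneg
  | cons q l ih =>
    simp only [W]
    apply max_le
    · exact ih.trans (by gcongr; exact le_max_left _ _)
    · have := le_max_right (W θ p' l) (θ p' q + W θ q l)
      linarith [hθ p p' q]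

lemma W_append (θ : X → X → ℝ) (p : X) (l l' : List X) : W θ p l' ≤ W θ p (l ++ l') := by
  induction l with
  | nil => exact le_rfl
  | cons q l ih => exact ih.trans (le_max_left _ _)

lemma W_upper (θ : X → X → ℝ) (hθ : ∀ p p' q, θ p q ≤ θ p' q + dist p p') (g : ℝ → X) (r η : ℝ)
    (t : ℝ) (hη : ∀ τ ∈ Icc r t, dist (g τ) (g r) ≤ η)
    (hg : ∀ s ∈ Icc r t, ∀ s' ∈ Icc r t, θ (g s) (g s') ≤ |s - s'|) (B : List X) (Ts : List ℝ) :
    ∀ e ∈ Icc r t, (e :: Ts).Pairwise (· ≥ ·) → (∀ τ ∈ Ts, τ ∈ Icc r t) →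
    W θ (g e) (Ts.map g ++ g r :: B) ≤ W θ (g r) B + (e - r) + η := by
  induction Ts with
  | nil =>
    intro e he _ _
    have hrt : r ∈ Icc r t := ⟨le_rfl, he.1.trans he.2⟩
    simp only [List.map_nil, List.nil_append, W]
    have h0 : 0 ≤ η := dist_nonneg.trans (hη e he)
    apply max_le
    · have := W_lip θ hθ (g e) (g r) B
      linarith [hη e he, he.1]
    · have := hg e he r hrt
      rw [abs_of_nonneg (by linarith [he.1])] at this
      linarith
  | cons q Ts ih =>
    intro e he hp hm
    simp only [List.map_cons, List.cons_append, W]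
    rw [List.pairwise_cons, List.pairwise_cons] at hp
    have hq := hm q (by simp)
    have hm' : ∀ τ ∈ Ts, τ ∈ Icc r t := fun τ hτ => hm τ (by simp [hτ])
    apply max_le
    · exact ih e he (List.pairwise_cons.2 ⟨fun a ha => hp.1 a (by simp [ha]), hp.2.2⟩) hm'
    · have h1 := ih q hq (List.pairwise_cons.2 hp.2) hm'
      have h2 := hg e he q hq
      have h3 : q ≤ e := hp.1 q (by simp)
      rw [abs_of_nonneg (by linarith)] at h2
      linarith

lemma side {c : X → X} {f : ℝ → X} {S : ℝ → List X} {δ : ℝ} (h : IsLift c f S δ) {r t : ℝ}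
    (hr : 0 ≤ r) (hrt : r ≤ t) (ht : t ≤ 1)
    (hmin : ∀ τ ∈ Icc r t, (S r).length ≤ (S τ).length)
    (θ : X → X → ℝ) (hθ : ∀ p p' q, θ p q ≤ θ p' q + dist p p') (η : ℝ)
    (hg : ∀ s ∈ Icc (0 : ℝ) 1, ∀ s' ∈ Icc (0 : ℝ) 1, θ (c (f s)) (c (f s')) ≤ |s - s'|)
    (hη : ∀ τ ∈ Icc r t, dist (c (f τ)) (c (f r)) ≤ η) :
    hgt θ (S r) + θ (c (f t)) (c (f r)) ≤ hgt θ (S t) ∧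
      hgt θ (S t) ≤ hgt θ (S r) + (t - r) + η := by
  obtain ⟨Ts, h1, h2, h3⟩ := lift_ext h hr hrt ht hmin
  have mr : r ∈ Icc (0 : ℝ) 1 := ⟨hr, hrt.trans ht⟩
  have mt : t ∈ Icc (0 : ℝ) 1 := ⟨hr.trans hrt, ht⟩
  have hsub : ∀ τ ∈ Icc r t, τ ∈ Icc (0 : ℝ) 1 := fun τ hτ => ⟨hr.trans hτ.1, hτ.2.trans ht⟩
  have h0 : 0 ≤ η := dist_nonneg.trans (hη r ⟨le_rfl, hrt⟩)
  have hhr := h.head r mr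
  have hht := h.head t mt
  cases Ts with
  | nil =>
    simp only [List.map_nil, List.nil_append] at h1
    rw [h1] at hht ⊢
    rw [hhr] at hht
    simp only [Option.some.injEq] at hht
    have := hg r mr r mr
    rw [hht] at this ⊢
    simp at this
    constructor <;> linarith
  | cons e Ts =>
    obtain ⟨B, hB⟩ : ∃ B, S r = c (f r) :: B := by
      cases hS : S r with
      | nil => simp [hS] at hhr
      | cons a B => simp [hS] at hhr; exact ⟨B, by rw [hhr]⟩
    have he : c (f t) = c (f e) := by
      rw [h1] at hht; simpa using hht.symm
    rw [h1, hB, he]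
    simp only [List.map_cons, List.cons_append, hgt]
    constructor
    · refine le_trans ?_ (W_append θ _ _ _)
      rw [add_comm]
      exact le_max_right _ _
    · have := W_upper θ hθ (fun τ => c (f τ)) r η t hη
        (fun s hs s' hs' => hg s (hsub s hs) s' (hsub s' hs')) B Ts e (h3 e (by simp)) h2
        (fun τ hτ => h3 τ (by simp [hτ]))
      linarith [(h3 e (by simp)).2]

lemma lift_bounds {c : X → X} {f : ℝ → X} {S : ℝ → List X} {δ : ℝ} (h : IsLift c f S δ) {s t : ℝ}
    (hs : 0 ≤ s) (hst : s ≤ t) (ht : t ≤ 1)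
    (θ : X → X → ℝ) (hθ : ∀ p p' q, θ p q ≤ θ p' q + dist p p') (η : ℝ)
    (hg : ∀ s ∈ Icc (0 : ℝ) 1, ∀ s' ∈ Icc (0 : ℝ) 1, θ (c (f s)) (c (f s')) ≤ |s - s'|)
    (hη : ∀ τ ∈ Icc s t, ∀ τ' ∈ Icc s t, dist (c (f τ)) (c (f τ')) ≤ η) :
    ∃ r ∈ Icc s t,
      hgt θ (S r) + θ (c (f t)) (c (f r)) ≤ hgt θ (S t) ∧
      hgt θ (S t) ≤ hgt θ (S r) + (t - r) + η ∧
      hgt θ (S r) + θ (c (f s)) (c (f r)) ≤ hgt θ (S s) ∧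
      hgt θ (S s) ≤ hgt θ (S r) + (r - s) + η := by
  obtain ⟨n, ⟨r, hr, rfl⟩, hmin⟩ := WellFounded.has_min (wellFounded_lt (α := ℕ))
    ((fun τ => (S τ).length) '' Icc s t) ⟨_, s, ⟨le_rfl, hst⟩, rfl⟩
  have hmin' : ∀ τ ∈ Icc s t, (S r).length ≤ (S τ).length := fun τ hτ =>
    not_lt.1 (hmin _ ⟨τ, hτ, rfl⟩)
  obtain ⟨a1, a2⟩ := side h (hs.trans hr.1) hr.2 ht (fun τ hτ => hmin' τ ⟨hr.1.trans hτ.1, hτ.2⟩)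
    θ hθ η hg (fun τ hτ => hη τ ⟨hr.1.trans hτ.1, hτ.2⟩ r hr)
  have b := side h.reverse (r := 1 - r) (t := 1 - s) (by linarith [hr.2]) (by linarith [hr.1])
    (by linarith) (fun τ hτ => by
      simp only [sub_sub_cancel]
      exact hmin' _ ⟨by linarith [hτ.2], by linarith [hτ.1, hr.2]⟩)
    θ hθ η (fun u hu u' hu' => by
      have := hg (1 - u) ⟨by linarith [hu.2], by linarith [hu.1]⟩ (1 - u')
        ⟨by linarith [hu'.2], by linarith [hu'.1]⟩
      rw [show (1 - u) - (1 - u') = -(u - u') by ring, abs_neg] at this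
      exact this)
    (fun τ hτ => by
      simp only [sub_sub_cancel]
      exact hη _ ⟨by linarith [hτ.2], by linarith [hτ.1, hr.2]⟩ r hr)
  simp only [sub_sub_cancel] at b
  exact ⟨r, hr, a1, a2, b.1, by linarith [b.2]⟩

end OneDim

/-! ### Part 5: the limit height function -/

namespace OneDim

section Limit
open Filter Topology

variable {X : Type*} [MetricSpace X]

/-- A cost between points, dominated by elapsed time. -/
noncomputable def th (f : ℝ → X) (p q : X) : ℝ :=
  ⨅ z : unitInterval × unitInterval, (|(z.1 : ℝ) - z.2| + dist p (f z.1) + dist q (f z.2))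

lemma th_bdd (f : ℝ → X) (p q : X) : BddBelow (range fun z : unitInterval × unitInterval =>
    (|(z.1 : ℝ) - z.2| + dist p (f z.1) + dist q (f z.2))) :=
  ⟨0, by rintro _ ⟨z, rfl⟩; positivity⟩

lemma th_nonneg (f : ℝ → X) (p q : X) : 0 ≤ th f p q :=
  le_ciInf fun z => by positivity

lemma th_left (f : ℝ → X) (p p' q : X) : th f p q ≤ th f p' q + dist p p' := by
  rw [← sub_le_iff_le_add]
  apply le_ciInf
  intro z
  have := ciInf_le (th_bdd f p q) z
  have h2 := dist_triangle p p' (f z.1)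
  unfold th
  linarith

lemma th_right (f : ℝ → X) (p q q' : X) : th f p q ≤ th f p q' + dist q q' := by
  rw [← sub_le_iff_le_add]
  apply le_ciInf
  intro z
  have := ciInf_le (th_bdd f p q) z
  have h2 := dist_triangle q q' (f z.2)
  unfold th
  linarith

lemma th_time (f : ℝ → X) (s t : unitInterval) : th f (f s) (f t) ≤ |(s : ℝ) - t| := by
  have := ciInf_le (th_bdd f (f s) (f t)) (s, t)
  simp only [dist_self, add_zero] at this
  exact this

lemma th_zero (f : ℝ → X) (hf : Continuous f) (p q : X) (h : th f p q ≤ 0) : p = q := by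
  have hc : Continuous fun z : unitInterval × unitInterval =>
    (|(z.1 : ℝ) - z.2| + dist p (f z.1) + dist q (f z.2)) := by fun_prop
  obtain ⟨z, _, hz⟩ := isCompact_univ.exists_isMinOn univ_nonempty hc.continuousOn
  have h1 : |(z.1 : ℝ) - z.2| + dist p (f z.1) + dist q (f z.2) ≤ th f p q :=
    le_ciInf fun w => hz (mem_univ w)
  have a1 := abs_nonneg ((z.1 : ℝ) - z.2)
  have a2 := dist_nonneg (x := p) (y := f z.1)
  have a3 := dist_nonneg (x := q) (y := f z.2)
  have b1 : (z.1 : ℝ) = z.2 := by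
    have : |(z.1 : ℝ) - z.2| = 0 := by linarith
    rw [abs_eq_zero] at this; linarith
  have b2 : p = f z.1 := dist_eq_zero.1 (by linarith)
  have b3 : q = f z.2 := dist_eq_zero.1 (by linarith)
  rw [b2, b3, b1]

theorem exists_height [Nonempty X] (hdim : CovDimLE X 1) (f : ℝ → X) (hf : Continuous f) :
    ∃ h : unitInterval → ℝ, Continuous h ∧ (∀ t, 0 ≤ h t) ∧ h 0 = 0 ∧
      (∀ s t : unitInterval, s ≤ t → (∀ r ∈ Icc s t, h s ≤ h r) → h s = h t → f s = f t) ∧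
      ∀ (p : unitInterval → unitInterval), Continuous p → ∀ (G : unitInterval × unitInterval → X),
        Continuous G → ∀ x₀ : X, (∀ τ, G (0, τ) = f (p τ)) → (∀ τ, G (1, τ) = x₀) →
        (∀ u, G (u, 0) = x₀) → (∀ u, G (u, 1) = x₀) → h (p 0) = h (p 1) := by
  have hKc : IsCompact (f '' Icc 0 1) := isCompact_Icc.image hf
  set ε : ℕ → ℝ := fun n => 1 / ((n : ℝ) + 1) with hε
  have hεpos : ∀ n, 0 < ε n := fun n => by simp only [hε]; positivity
  have hε1 : ∀ n, ε n ≤ 1 := fun n => by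
    simp only [hε]; rw [div_le_one (by positivity)]
    have : (0 : ℝ) ≤ n := by positivity
    linarith
  choose c hc using fun n => exists_lab hdim _ hKc (ε n) (hεpos n)
  choose S δ hS hS0 using fun n => exists_lift hf (hc n)
  set Θ : ℕ → X → X → ℝ := fun n p q => th f p q - 2 * ε n with hΘ
  set hn : ℕ → unitInterval → ℝ := fun n t => hgt (Θ n) (S n t) with hhn
  have near : ∀ n, ∀ t ∈ Icc (0 : ℝ) 1, dist (f t) (c n (f t)) ≤ ε n := fun n t ht =>
    ((hc n).near _ (mem_image_of_mem f ht)).le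
  have near' : ∀ n, ∀ t ∈ Icc (0 : ℝ) 1, dist (c n (f t)) (f t) ≤ ε n := fun n t ht => by
    rw [dist_comm]; exact near n t ht
  have hΘl : ∀ n, ∀ p p' q, Θ n p q ≤ Θ n p' q + dist p p' := by
    intro n p p' q
    have := th_left f p p' q
    simp only [hΘ]; linarith
  have hΘt : ∀ n, ∀ s ∈ Icc (0 : ℝ) 1, ∀ s' ∈ Icc (0 : ℝ) 1,
      Θ n (c n (f s)) (c n (f s')) ≤ |s - s'| := by
    intro n s hs s' hs'
    have h1 := th_left f (c n (f s)) (f s) (c n (f s'))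
    have h2 := th_right f (f s) (c n (f s')) (f s')
    have h3 := th_time f ⟨s, hs⟩ ⟨s', hs'⟩
    simp only at h3
    simp only [hΘ]; linarith [near' n s hs, near' n s' hs']
  have basic : ∀ n, ∀ s t : unitInterval, s ≤ t → ∀ η,
      (∀ τ ∈ Icc (s : ℝ) t, ∀ τ' ∈ Icc (s : ℝ) t, dist (f τ) (f τ') ≤ η) →
      ∃ r ∈ Icc s t, hn n r + th f (f t) (f r) - 4 * ε n ≤ hn n t ∧
        hn n r + th f (f s) (f r) - 4 * ε n ≤ hn n s ∧
        |hn n s - hn n t| ≤ ((t : ℝ) - s) + η + 6 * ε n := by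
    intro n s t hst η hη
    have hsub : ∀ τ ∈ Icc (s : ℝ) t, τ ∈ Icc (0 : ℝ) 1 := fun τ hτ =>
      ⟨s.2.1.trans hτ.1, hτ.2.trans t.2.2⟩
    obtain ⟨r, hr, a1, a2, a3, a4⟩ := lift_bounds (hS n) s.2.1 hst t.2.2 (Θ n) (hΘl n)
      (η + 2 * ε n) (hΘt n) (fun τ hτ τ' hτ' => by
        have h1 := dist_triangle (c n (f τ)) (f τ) (c n (f τ'))
        have h2 := dist_triangle (f τ) (f τ') (c n (f τ'))
        linarith [near' n τ (hsub τ hτ), near n τ' (hsub τ' hτ'), hη τ hτ τ' hτ'])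
    have key : ∀ u ∈ Icc (0 : ℝ) 1, th f (f u) (f r) - 4 * ε n ≤ Θ n (c n (f u)) (c n (f r)) := by
      intro u hu
      have h1 := th_left f (f u) (c n (f u)) (f r)
      have h2 := th_right f (c n (f u)) (f r) (c n (f r))
      simp only [hΘ]; linarith [near n u hu, near n r (hsub r hr)]
    have k1 := key t t.2
    have k2 := key s s.2
    have n1 := th_nonneg f (f t) (f r)
    have n2 := th_nonneg f (f s) (f r)
    refine ⟨⟨r, hsub r hr⟩, ⟨hr.1, hr.2⟩, ?_, ?_, ?_⟩
    · simp only [hhn]; linarith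
    · simp only [hhn]; linarith
    · have := hr.1
      have := hr.2
      simp only [hhn]
      rw [abs_le]; constructor <;> linarith
  -- equicontinuity
  have huc := (isCompact_Icc (a := (0 : ℝ)) (b := 1)).uniformContinuousOn_of_continuous
    hf.continuousOn
  rw [Metric.uniformContinuousOn_iff] at huc
  have EC : ∀ η > 0, ∃ d > 0, ∀ n, ∀ s t : unitInterval, dist s t < d →
      |hn n s - hn n t| ≤ η + 6 * ε n := by
    intro η hη
    obtain ⟨d, hd, hd'⟩ := huc (η / 2) (half_pos hη)
    have main : ∀ n, ∀ s t : unitInterval, s ≤ t → dist s t < min d (η / 2) →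
      |hn n s - hn n t| ≤ η + 6 * ε n := by
      intro n s t hst hdist
      have hdist' : (t : ℝ) - s < min d (η / 2) := by
        rw [dist_comm, Subtype.dist_eq, Real.dist_eq] at hdist
        exact (le_abs_self _).trans_lt hdist
      obtain ⟨r, hr, _, _, h3⟩ := basic n s t hst (η / 2) (fun τ hτ τ' hτ' => by
        refine (hd' τ ⟨s.2.1.trans hτ.1, hτ.2.trans t.2.2⟩ τ'
          ⟨s.2.1.trans hτ'.1, hτ'.2.trans t.2.2⟩ ?_).le
        rw [Real.dist_eq, abs_lt]
        have := hdist'.trans_le (min_le_left _ _)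
        constructor <;> linarith [hτ.1, hτ.2, hτ'.1, hτ'.2])
      have := hdist'.trans_le (min_le_right _ _)
      linarith
    refine ⟨min d (η / 2), lt_min hd (half_pos hη), ?_⟩
    intro n s t hdist
    rcases le_total s t with hst | hst
    · exact main n s t hst hdist
    · rw [abs_sub_comm]; rw [dist_comm] at hdist; exact main n t s hst hdist
  -- bounds
  have hn_nonneg : ∀ n t, 0 ≤ hn n t := fun n t => hgt_nonneg _ _
  have hn_zero : ∀ n, hn n 0 = 0 := by
    intro n
    simp only [hhn, Set.Icc.coe_zero, hS0]
    rfl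
  obtain ⟨D, hD⟩ := Metric.isBounded_iff.1 hKc.isBounded
  have hDI : ∀ τ ∈ Icc (0 : ℝ) 1, ∀ τ' ∈ Icc (0 : ℝ) 1, dist (f τ) (f τ') ≤ D := fun τ hτ τ' hτ' =>
    hD (mem_image_of_mem f hτ) (mem_image_of_mem f hτ')
  have hn_bdd : ∀ n t, hn n t ∈ Icc (0 : ℝ) (1 + D + 6) := by
    intro n t
    refine ⟨hn_nonneg n t, ?_⟩
    obtain ⟨_, _, _, _, h3⟩ := basic n 0 t t.2.1 D (fun τ hτ τ' hτ' =>
      hDI τ ⟨hτ.1, hτ.2.trans t.2.2⟩ τ' ⟨hτ'.1, hτ'.2.trans t.2.2⟩)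
    rw [hn_zero, abs_le] at h3
    have h4 := h3.1
    rw [Set.Icc.coe_zero] at h4
    linarith [hε1 n, t.2.2]
  -- ultralimit
  set U : Ultrafilter ℕ := hyperfilter ℕ with hU
  have hlim : ∀ t, ∃ L, Tendsto (fun n => hn n t) U (𝓝 L) := by
    intro t
    obtain ⟨L, _, hL⟩ := (isCompact_Icc (a := (0 : ℝ)) (b := 1 + D + 6)).ultrafilter_le_nhds
      (U.map fun n => hn n t) (by
        rw [le_principal_iff]
        exact Ultrafilter.mem_map.2 (Filter.univ_mem' fun n => hn_bdd n t))
    exact ⟨L, hL⟩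
  choose h hh using hlim
  have hε0 : Tendsto ε U (𝓝 0) :=
    tendsto_one_div_add_atTop_nhds_zero_nat.mono_left Nat.hyperfilter_le_atTop
  have hEC : ∀ η > 0, ∃ d > 0, ∀ s t : unitInterval, dist s t < d → |h s - h t| ≤ η := by
    intro η hη
    obtain ⟨d, hd, hd'⟩ := EC η hη
    refine ⟨d, hd, fun s t hst => ?_⟩
    have h1 : Tendsto (fun n => |hn n s - hn n t|) U (𝓝 |h s - h t|) := ((hh s).sub (hh t)).abs
    have h2 : Tendsto (fun n => η + 6 * ε n) U (𝓝 (η + 6 * 0)) := (hε0.const_mul 6).const_add η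
    have := le_of_tendsto_of_tendsto' h1 h2 (fun n => hd' n s t hst)
    simpa using this
  refine ⟨h, ?_, ?_, ?_, ?_, ?_⟩
  · rw [Metric.continuous_iff]
    intro t η hη
    obtain ⟨d, hd, hd'⟩ := hEC (η / 2) (half_pos hη)
    refine ⟨d, hd, fun s hs => ?_⟩
    rw [Real.dist_eq]
    linarith [hd' s t hs]
  · exact fun t => ge_of_tendsto' (hh t) (fun n => hn_nonneg n t)
  · refine tendsto_nhds_unique (hh 0) ?_
    simp only [hn_zero]
    exact tendsto_const_nhds
  · intro s t hst hmin heq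
    choose r hr hr1 hr2 _ using fun n => basic n s t hst D (fun τ hτ τ' hτ' =>
      hDI τ ⟨s.2.1.trans hτ.1, hτ.2.trans t.2.2⟩ τ' ⟨s.2.1.trans hτ'.1, hτ'.2.trans t.2.2⟩)
    obtain ⟨ρ, hρ, hρ'⟩ := (isCompact_Icc (a := s) (b := t)).ultrafilter_le_nhds (U.map r) (by
      rw [le_principal_iff]
      exact Ultrafilter.mem_map.2 (Filter.univ_mem' hr))
    have hρt : Tendsto r U (𝓝 ρ) := hρ'
    have hlimr : Tendsto (fun n => hn n (r n)) U (𝓝 (h ρ)) := by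
      have : Tendsto (fun n => hn n (r n) - hn n ρ) U (𝓝 0) := by
        rw [Metric.tendsto_nhds]
        intro η hη
        obtain ⟨d, hd, hd'⟩ := EC (η / 2) (half_pos hη)
        have e1 : ∀ᶠ n in (U : Filter ℕ), dist (r n) ρ < d := (Metric.tendsto_nhds.1 hρt) d hd
        have e2 : ∀ᶠ n in (U : Filter ℕ), ε n < η / 12 :=
          hε0.eventually (gt_mem_nhds (by linarith))
        filter_upwards [e1, e2] with n h1 h2
        rw [Real.dist_eq, sub_zero]
        linarith [hd' n _ _ h1]
      have h2 := this.add (hh ρ)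
      simpa using h2
    have side : ∀ u : unitInterval, (∀ n, hn n (r n) + th f (f u) (f (r n)) - 4 * ε n ≤ hn n u) →
        h u ≤ h ρ → f u = f ρ := by
      intro u hu hle
      have hth : Tendsto (fun n => th f (f u) (f (r n))) U (𝓝 (th f (f u) (f ρ))) := by
        have hcont : Continuous fun q => th f (f u) q := by
          have : LipschitzWith 1 fun q => th f (f u) q := LipschitzWith.of_dist_le_mul (by
            intro q q'
            rw [Real.dist_eq, abs_le]
            have h1 := th_right f (f u) q q'
            have h2 := th_right f (f u) q' q
            rw [dist_comm] at h2
            simp only [NNReal.coe_one, one_mul]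
            constructor <;> linarith)
          exact this.continuous
        have hcont2 : Continuous fun v : unitInterval => th f (f u) (f v) :=
          hcont.comp (hf.comp continuous_subtype_val)
        exact (hcont2.tendsto ρ).comp hρt
      have h1 := (hlimr.add hth).sub (hε0.const_mul 4)
      have h2 := le_of_tendsto_of_tendsto' h1 (hh u) hu
      apply th_zero f hf
      linarith
    have hmρ := hmin ρ hρ
    rw [side s hr2 hmρ, side t hr1 (heq ▸ hmρ)]
  · intro p hp G hG x₀ h0 h1 hl hr
    have : ∀ n, hn n (p 0) = hn n (p 1) := by
      intro n
      simp only [hhn]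
      rw [lift_null (hc n) (hS n) p hp G hG x₀ h0 h1 hl hr]
    refine tendsto_nhds_unique (hh (p 0)) ?_
    simp only [this]
    exact hh (p 1)

end Limit

end OneDim

/-! ### Part 6: the tree coded by a height function -/

namespace OneDim

open unitInterval in
/-- The tree pseudo-metric coded by `h`. -/
noncomputable def dh (h : C(unitInterval, ℝ)) (s t : unitInterval) : ℝ :=
  h s + h t - 2 * sInf (h '' uIcc s t)

lemma mn_le (h : C(unitInterval, ℝ)) {s t r : unitInterval} (hr : r ∈ uIcc s t) :
    sInf (h '' uIcc s t) ≤ h r :=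
  csInf_le (isCompact_uIcc.image h.continuous).bddBelow (mem_image_of_mem h hr)

lemma le_mn (h : C(unitInterval, ℝ)) {s t : unitInterval} {m : ℝ}
    (hm : ∀ r ∈ uIcc s t, m ≤ h r) : m ≤ sInf (h '' uIcc s t) :=
  le_csInf (nonempty_uIcc.image h) (by rintro _ ⟨r, hr, rfl⟩; exact hm r hr)

lemma dh_le (h : C(unitInterval, ℝ)) {s t : unitInterval} {m : ℝ}
    (hm : ∀ r ∈ uIcc s t, m ≤ h r) : dh h s t ≤ h s + h t - 2 * m := by
  have := le_mn h hm
  unfold dh; linarith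

lemma dh_comm (h : C(unitInterval, ℝ)) (s t : unitInterval) : dh h s t = dh h t s := by
  unfold dh; rw [uIcc_comm]; ring

lemma dh_self (h : C(unitInterval, ℝ)) (s : unitInterval) : dh h s s = 0 := by
  unfold dh; simp; ring

lemma dh_nonneg (h : C(unitInterval, ℝ)) (s t : unitInterval) : 0 ≤ dh h s t := by
  have h1 := mn_le h (left_mem_uIcc (a := s) (b := t))
  have h2 := mn_le h (right_mem_uIcc (a := s) (b := t))
  unfold dh; linarith

lemma dh_triangle (h : C(unitInterval, ℝ)) (s r t : unitInterval) :
    dh h s t ≤ dh h s r + dh h r t := by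
  have h1 := mn_le h (right_mem_uIcc (a := s) (b := r))
  have h2 := mn_le h (left_mem_uIcc (a := r) (b := t))
  have h3 : min (sInf (h '' uIcc s r)) (sInf (h '' uIcc r t)) ≤ sInf (h '' uIcc s t) := by
    apply le_mn
    intro x hx
    rcases uIcc_subset_uIcc_union_uIcc hx with hx | hx
    · exact (min_le_left _ _).trans (mn_le h hx)
    · exact (min_le_right _ _).trans (mn_le h hx)
  unfold dh
  rcases min_choice (sInf (h '' uIcc s r)) (sInf (h '' uIcc r t)) with h4 | h4 <;>
    rw [h4] at h3 <;> linarith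

/-- The interval with the tree pseudo-metric. -/
def Tr (_ : C(unitInterval, ℝ)) : Type := unitInterval

noncomputable instance (h : C(unitInterval, ℝ)) : PseudoMetricSpace (Tr h) where
  dist := dh h
  dist_self := dh_self h
  dist_comm := dh_comm h
  dist_triangle := dh_triangle h

/-- the identity map to the tree -/
def toT (h : C(unitInterval, ℝ)) (s : unitInterval) : Tr h := s

lemma toT_dist (h : C(unitInterval, ℝ)) (s t : unitInterval) :
    dist (toT h s) (toT h t) = dh h s t := rfl

lemma toT_cont (h : C(unitInterval, ℝ)) : Continuous (toT h) := by
  rw [Metric.continuous_iff]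
  intro s ε hε
  obtain ⟨δ, hδ, hd⟩ := Metric.continuous_iff.1 h.continuous s (ε / 4) (by linarith)
  refine ⟨δ, hδ, fun t ht => ?_⟩
  rw [toT_dist]
  have key : ∀ x ∈ uIcc t s, h s - ε / 4 ≤ h x := by
    intro x hx
    have h1 : dist x s ≤ dist t s := by
      have hx' : (x : ℝ) ∈ uIcc (t : ℝ) s := by
        rcases le_total t s with hts | hts
        · rw [uIcc_of_le hts] at hx
          rw [uIcc_of_le (show (t : ℝ) ≤ s from hts)]
          exact ⟨hx.1, hx.2⟩
        · rw [uIcc_of_ge hts] at hx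
          rw [uIcc_of_ge (show (s : ℝ) ≤ t from hts)]
          exact ⟨hx.1, hx.2⟩
      rw [Subtype.dist_eq, Subtype.dist_eq, Real.dist_eq, Real.dist_eq]
      rw [abs_sub_comm (x : ℝ), abs_sub_comm (t : ℝ)]
      exact Set.abs_sub_right_of_mem_uIcc hx'
    have := hd x (h1.trans_lt ht)
    rw [Real.dist_eq, abs_lt] at this
    linarith [this.1]
  have h2 := dh_le h key
  have h3 := hd t ht
  rw [Real.dist_eq, abs_lt] at h3
  linarith [h3.2]

/-- the ancestor of `s` at level `u` -/
noncomputable def cut (h : C(unitInterval, ℝ)) (s : unitInterval) (u : ℝ) : unitInterval :=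
  Classical.epsilon fun r => IsGreatest {r | r ≤ s ∧ h r ≤ u} r

section Cut
variable (h : C(unitInterval, ℝ))

lemma cut_spec (hz : h 0 = 0) (s : unitInterval) {u : ℝ} (hu : 0 ≤ u) :
    IsGreatest {r | r ≤ s ∧ h r ≤ u} (cut h s u) := by
  have hcl : IsClosed {r : unitInterval | r ≤ s ∧ h r ≤ u} :=
    isClosed_Iic.inter (isClosed_le h.continuous continuous_const)
  exact Classical.epsilon_spec (hcl.isCompact.exists_isGreatest
    ⟨0, unitInterval.nonneg s, by rw [hz]; exact hu⟩)

lemma cut_le (hz : h 0 = 0) (s : unitInterval) {u : ℝ} (hu : 0 ≤ u) : cut h s u ≤ s := (cut_spec h hz s hu).1.1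

lemma cut_of_le (hz : h 0 = 0) (s : unitInterval) {u : ℝ} (hu : 0 ≤ u) (hs : h s ≤ u) : cut h s u = s :=
  le_antisymm (cut_le h hz s hu) ((cut_spec h hz s hu).2 ⟨le_rfl, hs⟩)

lemma cut_height (hz : h 0 = 0) (s : unitInterval) {u : ℝ} (hu : 0 ≤ u) : h (cut h s u) = min (h s) u := by
  rcases le_or_gt (h s) u with hs | hs
  · rw [cut_of_le h hz s hu hs, min_eq_left hs]
  · rw [min_eq_right hs.le]
    obtain ⟨⟨h1, h2⟩, h3⟩ := cut_spec h hz s hu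
    obtain ⟨x, hx, hxu⟩ := intermediate_value_Icc h1 h.continuous.continuousOn ⟨h2, hs.le⟩
    have := h3 ⟨hx.2, hxu.le⟩
    have e := le_antisymm this hx.1
    rw [← e]
    exact hxu

lemma cut_min (hz : h 0 = 0) (s : unitInterval) {u : ℝ} (hu : 0 ≤ u) {x : unitInterval}
    (hx : x ∈ Icc (cut h s u) s) : h (cut h s u) ≤ h x := by
  obtain ⟨⟨h1, h2⟩, h3⟩ := cut_spec h hz s hu
  by_contra hlt
  push Not at hlt
  have := h3 ⟨hx.2, (hlt.trans_le h2).le⟩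
  rw [le_antisymm this hx.1] at hlt
  exact lt_irrefl _ hlt

lemma cut_u (hz : h 0 = 0) (s : unitInterval) {u u' : ℝ} (hu : 0 ≤ u) (huu : u ≤ u') :
    dh h (cut h s u) (cut h s u') ≤ u' - u := by
  have hu' := hu.trans huu
  have hle : cut h s u ≤ cut h s u' :=
    (cut_spec h hz s hu').2 ⟨cut_le h hz s hu, (cut_spec h hz s hu).1.2.trans huu⟩
  have := dh_le h (s := cut h s u) (t := cut h s u') (m := h (cut h s u)) (by
    intro x hx
    rw [uIcc_of_le hle] at hx
    exact cut_min h hz s hu ⟨hx.1, hx.2.trans (cut_le h hz s hu')⟩)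
  rw [cut_height h hz s hu, cut_height h hz s hu'] at this
  rcases min_cases (h s) u with h1 | h1 <;> rcases min_cases (h s) u' with h2 | h2 <;> linarith

lemma cut_u' (hz : h 0 = 0) (s : unitInterval) {u u' : ℝ} (hu : 0 ≤ u) (hu' : 0 ≤ u') :
    dh h (cut h s u) (cut h s u') ≤ |u - u'| := by
  rcases le_total u u' with hh | hh
  · rw [abs_sub_comm]
    exact (cut_u h hz s hu hh).trans (le_abs_self _)
  · rw [dh_comm]
    exact (cut_u h hz s hu' hh).trans (le_abs_self _)

lemma cut_s (hz : h 0 = 0) {s s' : unitInterval} (hs : s ≤ s') {u : ℝ} (hu : 0 ≤ u) :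
    dh h (cut h s u) (cut h s' u) ≤ dh h s s' := by
  set r := cut h s u with hr
  set r' := cut h s' u with hr'
  have hrr : r ≤ r' := (cut_spec h hz s' hu).2
    ⟨(cut_le h hz s hu).trans hs, (cut_spec h hz s hu).1.2⟩
  rcases le_or_gt r' s with hle | hlt
  · have : r' ≤ r := (cut_spec h hz s hu).2 ⟨hle, (cut_spec h hz s' hu).1.2⟩
    rw [le_antisymm hrr this, dh_self]
    exact dh_nonneg _ _ _
  · have hr's : r' ≤ s' := cut_le h hz s' hu
    have hm1 : sInf (h '' uIcc s s') ≤ h r' := mn_le h (by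
      rw [uIcc_of_le hs]; exact ⟨hlt.le, hr's⟩)
    have hm2 : sInf (h '' uIcc s s') ≤ h s := mn_le h left_mem_uIcc
    have e1 : h r = min (h s) u := cut_height h hz s hu
    have e2 : h r' = min (h s') u := cut_height h hz s' hu
    have := dh_le h (s := r) (t := r') (m := sInf (h '' uIcc s s')) (by
      intro x hx
      rw [uIcc_of_le hrr] at hx
      rcases le_total x s with hxs | hxs
      · refine le_trans ?_ (cut_min h hz s hu ⟨hx.1, hxs⟩)
        rw [← hr, e1]
        refine le_min hm2 (hm1.trans ?_)
        rw [e2]; exact min_le_right _ _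
      · exact mn_le h (by rw [uIcc_of_le hs]; exact ⟨hxs, hx.2.trans hr's⟩))
    refine this.trans ?_
    rw [e1, e2]
    unfold dh
    linarith [min_le_left (h s) u, min_le_left (h s') u]

lemma cut_s' (hz : h 0 = 0) (s s' : unitInterval) {u : ℝ} (hu : 0 ≤ u) :
    dh h (cut h s u) (cut h s' u) ≤ dh h s s' := by
  rcases le_total s s' with hh | hh
  · exact cut_s h hz hh hu
  · rw [dh_comm, dh_comm h s]; exact cut_s h hz hh hu

lemma dh_zero_height (hz : h 0 = 0) (hp : ∀ t, 0 ≤ h t) {s : unitInterval} (hs : h s = 0) : dh h s 0 = 0 := by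
  refine le_antisymm ?_ (dh_nonneg _ _ _)
  have := dh_le h (s := s) (t := 0) (m := 0) (fun r _ => hp r)
  rw [hs, hz] at this
  linarith

open Classical in
lemma tr_contractible (hz : h 0 = 0) (hp : ∀ t, 0 ≤ h t) : ContractibleSpace (Tr h) := by
  rw [contractible_iff_id_nullhomotopic]
  obtain ⟨x, _, hx⟩ := isCompact_univ.exists_isMaxOn univ_nonempty h.continuous.continuousOn
  set M := h x with hM
  have hMle : ∀ t, h t ≤ M := fun t => hx (mem_univ t)
  have hM0 : 0 ≤ M := hp x
  let F₀ : unitInterval × Tr h → Tr h := fun z => toT h (cut h z.2 ((1 - (z.1 : ℝ)) * M))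
  let F : unitInterval × Tr h → Tr h := fun z => if z.1 = 1 then toT h 0 else F₀ z
  have hu : ∀ v : unitInterval, 0 ≤ (1 - (v : ℝ)) * M := fun v =>
    mul_nonneg (by linarith [v.2.2]) hM0
  have hF₀F : ∀ z, dist (F z) (F₀ z) = 0 := by
    intro z
    by_cases hz1 : z.1 = 1
    · have e0 : ∀ w : unitInterval, dh h 0 (cut h w ((1 - ((1 : unitInterval) : ℝ)) * M)) = 0 := by
        intro w
        rw [dh_comm]
        apply dh_zero_height h hz hp
        rw [Set.Icc.coe_one, sub_self, zero_mul, cut_height h hz _ le_rfl, min_eq_right (hp _)]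
      simp only [F, hz1, if_true, F₀]
      exact e0 z.2
    · simp only [F, hz1, if_false, dist_self]
  have hlip : LipschitzWith (Real.toNNReal (1 + M)) F := by
    apply LipschitzWith.of_dist_le_mul
    intro z w
    rw [Real.coe_toNNReal _ (by linarith)]
    have h1 := dist_triangle4 (F z) (F₀ z) (F₀ w) (F w)
    rw [hF₀F z, dist_comm (F₀ w), hF₀F w] at h1
    have h2 := dh_triangle h (cut h z.2 ((1 - (z.1 : ℝ)) * M)) (cut h w.2 ((1 - (z.1 : ℝ)) * M))
      (cut h w.2 ((1 - (w.1 : ℝ)) * M))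
    have h3 := cut_s' h hz z.2 w.2 (hu z.1)
    have h4 := cut_u' h hz w.2 (hu z.1) (hu w.1)
    have h5 : |(1 - (z.1 : ℝ)) * M - (1 - (w.1 : ℝ)) * M| = dist z.1 w.1 * M := by
      rw [Subtype.dist_eq, Real.dist_eq,
        show (1 - (z.1 : ℝ)) * M - (1 - (w.1 : ℝ)) * M = -(((z.1 : ℝ) - w.1) * M) by ring, abs_neg,
        abs_mul, abs_of_nonneg hM0]
    have h6 : dist (F₀ z) (F₀ w) ≤ dist z.2 w.2 + dist z.1 w.1 * M := by
      rw [← h5]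
      exact h2.trans (add_le_add h3 h4)
    have h7 : dist z.2 w.2 ≤ dist z w := le_max_right _ _
    have h8 : dist z.1 w.1 ≤ dist z w := le_max_left _ _
    nlinarith
  refine ⟨toT h 0, ⟨⟨⟨F, hlip.continuous⟩, ?_, ?_⟩⟩⟩
  · intro s
    have : (0 : unitInterval) ≠ 1 := zero_ne_one
    simp only [F, this, if_false, F₀, Set.Icc.coe_zero, sub_zero, one_mul]
    exact cut_of_le h hz s hM0 (hMle s)
  · intro s
    simp only [F, if_true]
    rfl

end Cut

section Factor
variable {X : Type*} [MetricSpace X]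

lemma dh_zero_eq {h : C(unitInterval, ℝ)} {f : unitInterval → X}
    (ha : ∀ s t : unitInterval, s ≤ t → (∀ r ∈ Icc s t, h s ≤ h r) → h s = h t → f s = f t)
    {s t : unitInterval} (hst : dh h s t = 0) : f s = f t := by
  have main : ∀ s t : unitInterval, s ≤ t → dh h s t = 0 → f s = f t := by
    intro s t hst hd
    have h1 := mn_le h (left_mem_uIcc (a := s) (b := t))
    have h2 := mn_le h (right_mem_uIcc (a := s) (b := t))
    unfold dh at hd
    refine ha s t hst (fun r hr => ?_) (by linarith)
    have := mn_le h (s := s) (t := t) (r := r) (by rwa [uIcc_of_le hst])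
    linarith
  rcases le_total s t with hh | hh
  · exact main s t hh hst
  · rw [dh_comm] at hst; exact (main t s hh hst).symm

lemma factor_cont {h : C(unitInterval, ℝ)} {f : unitInterval → X} (hf : Continuous f)
    (ha : ∀ s t : unitInterval, s ≤ t → (∀ r ∈ Icc s t, h s ≤ h r) → h s = h t → f s = f t) :
    Continuous (fun s : Tr h => f s) := by
  rw [Metric.continuous_iff]
  intro s ε hε
  have hC : IsCompact {t : unitInterval | ε ≤ dist (f t) (f s)} :=
    (isClosed_le continuous_const (hf.dist continuous_const)).isCompact
  rcases eq_empty_or_nonempty {t : unitInterval | ε ≤ dist (f t) (f s)} with he | hne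
  · refine ⟨1, one_pos, fun t _ => ?_⟩
    by_contra hcon
    push Not at hcon
    have : t ∈ {t : unitInterval | ε ≤ dist (f t) (f s)} := hcon
    rw [he] at this
    exact this
  · have hcont : Continuous fun t : unitInterval => dist (toT h t) s :=
      (toT_cont h).dist continuous_const
    obtain ⟨t₀, ht₀, hmin⟩ := hC.exists_isMinOn hne hcont.continuousOn
    refine ⟨dist (toT h t₀) s, ?_, ?_⟩
    · refine lt_of_le_of_ne dist_nonneg (fun heq => ?_)
      have h1 : f t₀ = f s := dh_zero_eq ha heq.symm
      have h2 : ε ≤ dist (f t₀) (f s) := ht₀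
      rw [h1, dist_self] at h2
      linarith
    · intro t ht
      by_contra hcon
      push Not at hcon
      have : dist (toT h t₀) s ≤ dist (toT h t) s := hmin hcon
      exact absurd ht (not_lt.2 this)

open Classical in
/-- Two paths which lift to the tree with the same endpoints are homotopic. -/
lemma tree_homotopic {h : C(unitInterval, ℝ)} (hz : h 0 = 0) (hpos : ∀ t, 0 ≤ h t)
    {f : unitInterval → X} (hf : Continuous f)
    (ha : ∀ s t : unitInterval, s ≤ t → (∀ r ∈ Icc s t, h s ≤ h r) → h s = h t → f s = f t)
    (p q : unitInterval → unitInterval) (hp : Continuous fun τ => toT h (p τ))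
    (hq : Continuous fun τ => toT h (q τ)) (e0 : dh h (p 0) (q 0) = 0) (e1 : dh h (p 1) (q 1) = 0)
    {x y : X} (P Q : Path x y) (hP : ∀ τ, P τ = f (p τ)) (hQ : ∀ τ, Q τ = f (q τ)) :
    P.Homotopic Q := by
  have := tr_contractible h hz hpos
  let q' : unitInterval → Tr h := fun τ =>
    if τ = 0 then toT h (p 0) else if τ = 1 then toT h (p 1) else toT h (q τ)
  have hqq : ∀ τ, dist (q' τ) (toT h (q τ)) = 0 := by
    intro τ
    by_cases h0 : τ = 0
    · simp only [q', h0, if_true]; exact e0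
    · by_cases h1 : τ = 1
      · simp only [q', h1, if_true, one_ne_zero, if_false]; exact e1
      · simp only [q', h0, h1, if_false, dist_self]
  have hq' : Continuous q' := by
    rw [Metric.continuous_iff] at hq ⊢
    intro b ε hε
    obtain ⟨δ, hδ, hd⟩ := hq b ε hε
    refine ⟨δ, hδ, fun a hab => ?_⟩
    have h1 := dist_triangle4 (q' a) (toT h (q a)) (toT h (q b)) (q' b)
    rw [hqq a, dist_comm (toT h (q b)), hqq b] at h1
    linarith [hd a hab]
  let F : C(Tr h, X) := ⟨fun s : Tr h => f s, factor_cont hf ha⟩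
  let p1 : Path (toT h (p 0)) (toT h (p 1)) := ⟨⟨fun τ => toT h (p τ), hp⟩, rfl, rfl⟩
  let p2 : Path (toT h (p 0)) (toT h (p 1)) := ⟨⟨q', hq'⟩, by simp [q'], by simp [q']⟩
  have hh := (SimplyConnectedSpace.paths_homotopic p1 p2).map F
  have hx : x = f (p 0) := by rw [← hP, P.source]
  have hy : y = f (p 1) := by rw [← hP, P.target]
  subst hx hy
  have a1 : P = p1.map F.continuous := by
    ext τ; exact hP τ
  have a2 : Q = p2.map F.continuous := by
    ext τ; rw [hQ τ]
    have e : f (q' τ) = f (q τ) := dh_zero_eq ha (hqq τ)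
    exact e.symm
  rw [a1, a2]
  exact hh

end Factor

end OneDim

/-! ### Part 7: existence and uniqueness of reduced paths -/

namespace OneDim

section Final
variable {X : Type*} [MetricSpace X]

lemma exists_hd (hdim : CovDimLE X 1) {x y : X} (γ : Path x y) :
    ∃ h : C(unitInterval, ℝ), h 0 = 0 ∧ (∀ t, 0 ≤ h t) ∧
      (∀ s t : unitInterval, s ≤ t → (∀ r ∈ Icc s t, h s ≤ h r) → h s = h t → γ s = γ t) ∧
      ∀ p : unitInterval → unitInterval, Continuous p → ∀ (x₀ : X) (P : Path x₀ x₀),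
        (∀ τ, P τ = γ (p τ)) → P.Homotopic (Path.refl x₀) → h (p 0) = h (p 1) := by
  have : Nonempty X := ⟨x⟩
  obtain ⟨h, hc, hpos, hz, ha, hb⟩ := exists_height hdim γ.extend γ.extend.continuous
  refine ⟨⟨h, hc⟩, hz, hpos, ?_, ?_⟩
  · intro s t hst hr he
    have := ha s t hst hr he
    simpa using this
  · rintro p hp x₀ P hP ⟨G⟩
    refine hb p hp G G.continuous x₀ ?_ ?_ ?_ ?_
    · intro τ
      have e : G (0, τ) = P τ := G.map_zero_left τ
      rw [e]
      simpa using hP τ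
    · intro τ
      exact G.map_one_left τ
    · intro u
      exact Path.Homotopy.source G u
    · intro u
      exact Path.Homotopy.target G u

lemma ext_clamp {a b : X} (α : Path a b) (s t τ : unitInterval) :
    α.extend (min (max (τ : ℝ) s) t) = α (min (max τ s) t) := by
  have : (min (max (τ : ℝ) s) t) = ((min (max τ s) t : unitInterval) : ℝ) := by
    have hm : Monotone (fun x : unitInterval => (x : ℝ)) := fun _ _ hxy => hxy
    have e1 := hm.map_min (a := max τ s) (b := t)
    have e2 := hm.map_max (a := τ) (b := s)
    exact (e1.trans (congrArg (fun z => min z (t : ℝ)) e2)).symm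
  rw [this, Path.extend_extends']

lemma irr_tool {a b : X} {β : Path a b}
    (hβ : ¬ ∃ (s t : ℝ) (hst : s < t) (_ : 0 ≤ s) (_ : t ≤ 1) (h : β.extend s = β.extend t),
      Path.Homotopic
        ((β.truncate s t).cast (by rw [min_eq_left hst.le]; exact h.symm) rfl)
        (Path.refl (β.extend t)))
    {s t : unitInterval} (hst : s < t) {x : X} (P : Path x x)
    (hP : ∀ τ, P τ = β (min (max τ s) t)) (hn : P.Homotopic (Path.refl x)) : False := by
  have h0 : x = β s := by
    rw [← P.source, hP, max_eq_right unitInterval.nonneg', min_eq_left hst.le]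
  have h1 : x = β t := by
    rw [← P.target, hP, max_eq_left unitInterval.le_one', min_eq_right unitInterval.le_one']
  have h2 : x = β.extend t := by simpa using h1
  have hst' : (s : ℝ) < t := hst
  have he : β.extend s = β.extend t := by rw [← h2]; simpa using h0.symm
  apply hβ
  refine ⟨s, t, hst', s.2.1, t.2.2, he, ?_⟩
  subst h2
  convert hn using 1
  ext τ
  rw [hP, ← ext_clamp]
  rfl

lemma const_case {a b : X} {β β' : Path a b} (hh : β.Homotopic β') (hc : ∀ t, β' t = a)
    (hβ : IsReducedPath β) : ∀ t, β t = a := by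
  rcases hβ with hβ | hβ
  · exact hβ
  · exfalso
    have hab : b = a := by rw [← hc 1, β'.target]
    subst hab
    have : β' = Path.refl _ := by ext t; exact hc t
    rw [this] at hh
    refine irr_tool hβ (s := 0) (t := 1) zero_lt_one β ?_ hh
    intro τ
    rw [max_eq_left unitInterval.nonneg', min_eq_left unitInterval.le_one']

lemma no_fold {a b : X} {β : Path a b}
    (hβ : ¬ ∃ (s t : ℝ) (hst : s < t) (_ : 0 ≤ s) (_ : t ≤ 1) (h : β.extend s = β.extend t),
      Path.Homotopic
        ((β.truncate s t).cast (by rw [min_eq_left hst.le]; exact h.symm) rfl)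
        (Path.refl (β.extend t)))
    {h : C(unitInterval, ℝ)} (hz : h 0 = 0) (hpos : ∀ t, 0 ≤ h t)
    {f : unitInterval → X} (hf : Continuous f)
    (ha : ∀ s t : unitInterval, s ≤ t → (∀ r ∈ Icc s t, h s ≤ h r) → h s = h t → f s = f t)
    (e : unitInterval → unitInterval) (he : Continuous e) (hef : ∀ τ, β τ = f (e τ))
    {s t : unitInterval} (hst : s < t) (hd : dh h (e s) (e t) = 0) : False := by
  have hst' : f (e s) = f (e t) := dh_zero_eq ha hd
  have c0 : min (max 0 s) t = s := by
    rw [max_eq_right unitInterval.nonneg', min_eq_left hst.le]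
  have c1 : min (max 1 s) t = t := by
    rw [max_eq_left unitInterval.le_one', min_eq_right unitInterval.le_one']
  have hcl : Continuous fun τ : unitInterval => e (min (max τ s) t) := by fun_prop
  let P : Path (f (e t)) (f (e t)) :=
    ⟨⟨fun τ => f (e (min (max τ s) t)), hf.comp hcl⟩, by
      show f (e (min (max 0 s) t)) = _
      rw [c0, hst'], by
      show f (e (min (max 1 s) t)) = _
      rw [c1]⟩
  refine irr_tool hβ hst P (fun τ => (hef _).symm) ?_
  refine tree_homotopic hz hpos hf ha (fun τ => e (min (max τ s) t)) (fun _ => e t)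
    ((toT_cont h).comp hcl) continuous_const ?_ ?_ P (Path.refl _) (fun τ => rfl) (fun τ => rfl)
  · rw [c0]; exact hd
  · rw [c1]; exact dh_self _ _

lemma strictMono_of_no_fold (g : C(unitInterval, ℝ)) (hz : g 0 = 0) (hpos : ∀ t, 0 ≤ g t)
    (hno : ∀ s t : unitInterval, s < t → (∀ r ∈ Icc s t, g s ≤ g r) → g s = g t → False) :
    StrictMono g := by
  intro a b hab
  by_contra hcon
  push Not at hcon
  obtain ⟨c, hac, hcb, hc⟩ : ∃ c, a < c ∧ c ≤ b ∧ ∀ r ∈ Icc a b, g c ≤ g r := by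
    obtain ⟨c, hc, hmin⟩ := isCompact_Icc.exists_isMinOn (nonempty_Icc.2 hab.le)
      g.continuous.continuousOn
    rcases eq_or_lt_of_le hc.1 with h1 | h1
    · refine ⟨b, hab, le_rfl, fun r hr => hcon.trans ?_⟩
      rw [h1]; exact hmin hr
    · exact ⟨c, h1, hc.2, fun r hr => hmin hr⟩
  have hs := cut_height g hz a (hpos c)
  rw [min_eq_right (hc a ⟨le_rfl, hab.le⟩)] at hs
  refine hno (cut g a (g c)) c ((cut_le g hz a (hpos c)).trans_lt hac) ?_ hs
  intro r hr
  rcases le_total r a with h1 | h1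
  · exact cut_min g hz a (hpos c) ⟨hr.1, h1⟩
  · rw [hs]; exact hc r ⟨h1, hr.2.trans hcb⟩

/-- Two increasing functions with the same endpoints differ by a reparametrization. -/
lemma exists_repar (g₁ g₂ : C(unitInterval, ℝ)) (h₁ : StrictMono g₁) (h₂ : StrictMono g₂)
    (e0 : g₁ 0 = g₂ 0) (e1 : g₁ 1 = g₂ 1) :
    ∃ φ : unitInterval ≃ₜ unitInterval, StrictMono (fun t => φ t) ∧ ∀ t, g₁ (φ t) = g₂ t := by
  have mk : ∀ g : C(unitInterval, ℝ), StrictMono g → g 0 = g₁ 0 → g 1 = g₁ 1 →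
      ∃ e : unitInterval ≃o Icc (g₁ 0) (g₁ 1), ∀ t, (e t : ℝ) = g t := by
    intro g hg h0 h1
    let k : unitInterval → Icc (g₁ 0) (g₁ 1) := fun t =>
      ⟨g t, h0 ▸ hg.monotone (unitInterval.nonneg t), h1 ▸ hg.monotone (unitInterval.le_one t)⟩
    have hk : StrictMono k := fun x y hxy => hg hxy
    have hs : Function.Surjective k := by
      rintro ⟨y, hy⟩
      rw [← h0, ← h1] at hy
      obtain ⟨x, _, hx⟩ := intermediate_value_Icc (zero_le_one (α := unitInterval))
        g.continuous.continuousOn hy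
      exact ⟨x, Subtype.ext hx⟩
    exact ⟨StrictMono.orderIsoOfSurjective k hk hs, fun t => rfl⟩
  obtain ⟨a₁, ha₁⟩ := mk g₁ h₁ rfl rfl
  obtain ⟨a₂, ha₂⟩ := mk g₂ h₂ e0.symm e1.symm
  refine ⟨(a₂.trans a₁.symm).toHomeomorph, (a₂.trans a₁.symm).strictMono, fun t => ?_⟩
  rw [← ha₁, ← ha₂]
  simp

/-- the first half of the interval -/
noncomputable def half₁ (τ : unitInterval) : unitInterval :=
  ⟨(τ : ℝ) / 2, by constructor <;> linarith [τ.2.1, τ.2.2]⟩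

/-- the second half of the interval, reversed -/
noncomputable def half₂ (τ : unitInterval) : unitInterval :=
  ⟨1 - (τ : ℝ) / 2, by constructor <;> linarith [τ.2.1, τ.2.2]⟩

lemma half₁_cont : Continuous half₁ :=
  Continuous.subtype_mk (by fun_prop) _

lemma half₂_cont : Continuous half₂ :=
  Continuous.subtype_mk (by fun_prop) _

lemma half₁_surj {r : unitInterval} (hr : (r : ℝ) ≤ 1 / 2) : ∃ x, half₁ x = r :=
  ⟨⟨2 * r, by constructor <;> linarith [r.2.1]⟩, Subtype.ext (by simp [half₁])⟩

lemma half₂_surj {r : unitInterval} (hr : 1 / 2 ≤ (r : ℝ)) : ∃ x, half₂ x = r :=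
  ⟨⟨2 - 2 * r, by constructor <;> linarith [r.2.2]⟩, Subtype.ext (by simp [half₂]; ring)⟩

lemma half₁_le {s t : unitInterval} : half₁ s ≤ half₁ t ↔ s ≤ t := by
  rw [← Subtype.coe_le_coe, ← Subtype.coe_le_coe]
  simp only [half₁]
  constructor <;> intro h <;> linarith

lemma half₂_le {s t : unitInterval} : half₂ s ≤ half₂ t ↔ t ≤ s := by
  rw [← Subtype.coe_le_coe, ← Subtype.coe_le_coe]
  simp only [half₂]
  constructor <;> intro h <;> linarith

lemma trans_half₁ {a b c : X} (β : Path a b) (δ : Path b c) (τ : unitInterval) :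
    (β.trans δ) (half₁ τ) = β τ := by
  rw [Path.trans_apply]
  have h : ((half₁ τ : unitInterval) : ℝ) ≤ 1 / 2 := by simp only [half₁]; linarith [τ.2.2]
  rw [dif_pos h]
  congr 1
  exact Subtype.ext (by simp only [half₁]; ring)

lemma trans_half₂ {a b c : X} (β : Path a b) (δ : Path c b) (τ : unitInterval) :
    (β.trans δ.symm) (half₂ τ) = δ τ := by
  rw [Path.trans_apply]
  by_cases h : ((half₂ τ : unitInterval) : ℝ) ≤ 1 / 2
  · have hτ : τ = 1 := by
      refine le_antisymm (unitInterval.le_one τ) ?_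
      simp only [half₂] at h
      show (1 : ℝ) ≤ τ
      linarith
    subst hτ
    rw [dif_pos h, δ.target]
    convert β.target
    simp only [half₂, Set.Icc.coe_one]
    norm_num
  · rw [dif_neg h, Path.symm_apply]
    show δ (unitInterval.symm _) = δ τ
    congr 1
    exact Subtype.ext (by simp only [half₂, unitInterval.coe_symm_eq]; ring)

lemma uniq_irr (hdim : CovDimLE X 1) {a b : X} {β β' : Path a b} (hh : β.Homotopic β')
    (hβ : ¬ ∃ (s t : ℝ) (hst : s < t) (_ : 0 ≤ s) (_ : t ≤ 1) (h : β.extend s = β.extend t),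
      Path.Homotopic
        ((β.truncate s t).cast (by rw [min_eq_left hst.le]; exact h.symm) rfl)
        (Path.refl (β.extend t)))
    (hβ' : ¬ ∃ (s t : ℝ) (hst : s < t) (_ : 0 ≤ s) (_ : t ≤ 1) (h : β'.extend s = β'.extend t),
      Path.Homotopic
        ((β'.truncate s t).cast (by rw [min_eq_left hst.le]; exact h.symm) rfl)
        (Path.refl (β'.extend t))) :
    ∃ φ : unitInterval ≃ₜ unitInterval, StrictMono (fun t => φ t) ∧ ∀ t, β' t = β (φ t) := by
  set γ : Path a a := β.trans β'.symm with hγ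
  have hnull : γ.Homotopic (Path.refl a) :=
    (Path.Homotopic.hcomp hh (Path.Homotopic.refl β'.symm)).trans (Path.Homotopic.trans_symm β')
  obtain ⟨h, hz, hpos, ha, hb⟩ := exists_hd hdim γ
  have h1 : h 1 = 0 := by rw [← hz]; exact (hb id continuous_id a γ (fun _ => rfl) hnull).symm
  let g₁ : C(unitInterval, ℝ) := ⟨fun τ => h (half₁ τ), h.continuous.comp half₁_cont⟩
  let g₂ : C(unitInterval, ℝ) := ⟨fun τ => h (half₂ τ), h.continuous.comp half₂_cont⟩
  have z1 : half₁ 0 = 0 := Subtype.ext (by simp [half₁])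
  have z2 : half₂ 0 = 1 := Subtype.ext (by simp [half₂])
  have o12 : half₁ 1 = half₂ 1 := Subtype.ext (by simp [half₁, half₂]; norm_num)
  have m1 : StrictMono g₁ := by
    apply strictMono_of_no_fold g₁ (by show h (half₁ 0) = 0; rw [z1, hz]) (fun t => hpos _)
    intro s t hst hr he
    refine no_fold hβ hz hpos γ.continuous ha half₁ half₁_cont
      (fun τ => (trans_half₁ β β'.symm τ).symm) hst (le_antisymm ?_ (dh_nonneg _ _ _))
    have := dh_le h (s := half₁ s) (t := half₁ t) (m := h (half₁ s)) (by
      intro r hrm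
      rw [uIcc_of_le (half₁_le.2 hst.le)] at hrm
      obtain ⟨x, rfl⟩ := half₁_surj (r := r) (by
        have : (r : ℝ) ≤ half₁ t := hrm.2
        simp only [half₁] at this
        linarith [t.2.2])
      exact hr x ⟨half₁_le.1 hrm.1, half₁_le.1 hrm.2⟩)
    have he' : h (half₁ s) = h (half₁ t) := he
    linarith
  have m2 : StrictMono g₂ := by
    apply strictMono_of_no_fold g₂ (by show h (half₂ 0) = 0; rw [z2, h1]) (fun t => hpos _)
    intro s t hst hr he
    refine no_fold hβ' hz hpos γ.continuous ha half₂ half₂_cont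
      (fun τ => (trans_half₂ β β' τ).symm) hst (le_antisymm ?_ (dh_nonneg _ _ _))
    have := dh_le h (s := half₂ s) (t := half₂ t) (m := h (half₂ s)) (by
      intro r hrm
      rw [uIcc_of_ge (half₂_le.2 hst.le)] at hrm
      obtain ⟨x, rfl⟩ := half₂_surj (r := r) (by
        have : ((half₂ t : unitInterval) : ℝ) ≤ r := hrm.1
        simp only [half₂] at this
        linarith [t.2.2])
      exact hr x ⟨half₂_le.1 hrm.2, half₂_le.1 hrm.1⟩)
    have he' : h (half₂ s) = h (half₂ t) := he
    linarith
  obtain ⟨φ, hφ, hφe⟩ := exists_repar g₁ g₂ m1 m2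
    (by show h (half₁ 0) = h (half₂ 0); rw [z1, z2, hz, h1])
    (by show h (half₁ 1) = h (half₂ 1); rw [o12])
  refine ⟨φ, hφ, fun t => ?_⟩
  rw [← trans_half₂ β β' t, ← trans_half₁ β β'.symm (φ t)]
  symm
  have hφt : h (half₁ (φ t)) = h (half₂ t) := hφe t
  apply ha
  · show ((φ t : unitInterval) : ℝ) / 2 ≤ 1 - (t : ℝ) / 2
    linarith [(φ t).2.2, t.2.2]
  · intro r hr
    rcases le_total (r : ℝ) (1 / 2) with hr2 | hr2
    · obtain ⟨x, rfl⟩ := half₁_surj hr2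
      exact m1.monotone (half₁_le.1 hr.1)
    · obtain ⟨x, rfl⟩ := half₂_surj hr2
      rw [hφt]
      exact m2.monotone (half₂_le.1 hr.2)
  · exact hφt

lemma exists_reduced (hdim : CovDimLE X 1) {a b : X} (α : Path a b) :
    ∃ β : Path a b, α.Homotopic β ∧ IsReducedPath β ∧
      (Set.range fun t => β t) ⊆ (Set.range fun t => α t) := by
  obtain ⟨h, hz, hpos, ha, hb⟩ := exists_hd hdim α
  let q : unitInterval → unitInterval := fun v => cut h 1 ((v : ℝ) * h 1)
  have hu : ∀ v : unitInterval, 0 ≤ (v : ℝ) * h 1 := fun v => mul_nonneg v.2.1 (hpos 1)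
  have hqT : Continuous fun v => toT h (q v) := by
    have : LipschitzWith (Real.toNNReal (h 1)) fun v => toT h (q v) := by
      apply LipschitzWith.of_dist_le_mul
      intro v w
      rw [Real.coe_toNNReal _ (hpos 1), toT_dist]
      refine (cut_u' h hz 1 (hu v) (hu w)).trans (le_of_eq ?_)
      rw [← sub_mul, abs_mul, abs_of_nonneg (hpos 1), mul_comm, Subtype.dist_eq, Real.dist_eq]
    exact this.continuous
  have hqh : ∀ v, h (q v) = v * h 1 := fun v => by
    rw [cut_height h hz 1 (hu v)]
    exact min_eq_right (by nlinarith [v.2.2, hpos 1])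
  have hq0 : dh h (q 0) 0 = 0 := dh_zero_height h hz hpos (by rw [hqh]; simp)
  have hq1 : q 1 = 1 := cut_of_le h hz 1 (hu 1) (by simp)
  have hcont : Continuous fun v => α (q v) :=
    (factor_cont α.continuous ha).comp hqT
  let β : Path a b := ⟨⟨fun v => α (q v), hcont⟩,
    by show α (q 0) = a; rw [dh_zero_eq ha hq0, α.source],
    by show α (q 1) = b; rw [hq1, α.target]⟩
  refine ⟨β, ?_, ?_, ?_⟩
  · refine tree_homotopic hz hpos α.continuous ha id q (toT_cont h) hqT ?_ ?_ α β
      (fun _ => rfl) (fun _ => rfl)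
    · rw [dh_comm]; exact hq0
    · rw [hq1]; exact dh_self _ _
  · rcases eq_or_lt_of_le (hpos 1) with h1 | h1
    · left
      intro t
      have : dh h (q t) 0 = 0 := dh_zero_height h hz hpos (by rw [hqh, ← h1, mul_zero])
      show α (q t) = a
      rw [dh_zero_eq ha this, α.source]
    · right
      rintro ⟨s, t, hst, hs0, ht1, he, hn⟩
      obtain ⟨s', rfl⟩ : ∃ s' : unitInterval, (s' : ℝ) = s := ⟨⟨s, hs0, by linarith⟩, rfl⟩
      obtain ⟨t', rfl⟩ : ∃ t' : unitInterval, (t' : ℝ) = t := ⟨⟨t, by linarith, ht1⟩, rfl⟩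
      have hst' : s' ≤ t' := hst.le
      have c0 : min (max 0 s') t' = s' := by
        rw [max_eq_right unitInterval.nonneg', min_eq_left hst']
      have c1 : min (max 1 s') t' = t' := by
        rw [max_eq_left unitInterval.le_one', min_eq_right unitInterval.le_one']
      have : PathConnectedSpace unitInterval :=
        isPathConnected_iff_pathConnectedSpace.1
          ((convex_Icc (0 : ℝ) 1).isPathConnected ⟨0, by simp⟩)
      let w : Path (q s') (q t') := PathConnectedSpace.somePath _ _
      have es : α (q s') = β.extend t' := by
        rw [← he]; simp [β]
      have et : α (q t') = β.extend t' := by simp [β]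
      let Q : Path (β.extend t') (β.extend t') :=
        ⟨⟨fun τ => α (w τ), α.continuous.comp w.continuous⟩,
          by show α (w 0) = _; rw [w.source, es],
          by show α (w 1) = _; rw [w.target, et]⟩
      have hQ : Q.Homotopic (Path.refl _) := by
        refine Path.Homotopic.trans ?_ hn
        refine tree_homotopic hz hpos α.continuous ha w (fun τ => q (min (max τ s') t'))
          ((toT_cont h).comp w.continuous) (hqT.comp (by fun_prop)) ?_ ?_ Q _ (fun _ => rfl) ?_
        · rw [c0, w.source]; exact dh_self _ _
        · rw [c1, w.target]; exact dh_self _ _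
        · intro τ
          exact ext_clamp β s' t' τ
      have := hb w w.continuous _ Q (fun _ => rfl) hQ
      rw [w.source, w.target, hqh, hqh] at this
      exact hst.ne (mul_right_cancel₀ h1.ne' this)
  · rintro _ ⟨t, rfl⟩
    exact ⟨q t, rfl⟩

end Final

end OneDim

/-- In a one-dimensional metric space every path is homotopic rel endpoints to a reduced
path inside its image, uniquely up to orientation preserving reparametrization. -/
theorem stmt_10 {X : Type} [MetricSpace X] (hdim : CovDimLE X 1)
    {a b : X} (α : Path a b) :
    ∃ β : Path a b, α.Homotopic β ∧ IsReducedPath β ∧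
      (Set.range fun t => β t) ⊆ (Set.range fun t => α t) ∧
      ∀ β' : Path a b, α.Homotopic β' → IsReducedPath β' →
        ∃ φ : unitInterval ≃ₜ unitInterval, StrictMono (fun t => φ t) ∧
          ∀ t, β' t = β (φ t) := by
  obtain ⟨β, h1, h2, h3⟩ := OneDim.exists_reduced hdim α
  refine ⟨β, h1, h2, h3, fun β' h1' h2' => ?_⟩
  have hh : β.Homotopic β' := h1.symm.trans h1'
  have key : (∀ t, β t = a) → (∀ t, β' t = a) →
      ∃ φ : unitInterval ≃ₜ unitInterval, StrictMono (fun t => φ t) ∧ ∀ t, β' t = β (φ t) :=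
    fun k k' => ⟨Homeomorph.refl _, strictMono_id, fun t => by rw [k, k']⟩
  rcases id h2 with k | k
  · exact key k (OneDim.const_case hh.symm k h2')
  · rcases id h2' with k' | k'
    · exact key (OneDim.const_case hh k' h2) k'
    · exact OneDim.uniq_irr hdim hh k k'
end

section
/- Let X be a one-dimensional Peano continuum whose fundamental group is finitely generated and which admits a simply connected covering space. Then there exists a finite subgraph Y ⊆ X such that the inclusion induces an isomorphism π₁(Y, x₀) → π₁(X, x₀), using the fact that inclusions of one-dimensional spaces induce injections on fundamental groups. -/
open Set

/-- A subset is a finite (topological) graph: finitely many vertices and finitely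
many edges, each edge an arc with endpoints among the vertices, interiors of edges
pairwise disjoint and disjoint from the vertex set. -/
def IsFiniteTopGraph {X : Type*} [TopologicalSpace X] (Y : Set X) : Prop :=
  ∃ (V : Finset X) (n : ℕ) (e : Fin n → C(unitInterval, X)),
    (∀ i, Function.Injective (e i)) ∧
    (∀ i, e i 0 ∈ V ∧ e i 1 ∈ V) ∧
    (∀ i, ∀ t : unitInterval, e i t ∈ V → t = 0 ∨ t = 1) ∧
    (∀ i j, i ≠ j → ∀ x, x ∈ Set.range (e i) → x ∈ Set.range (e j) → x ∈ V) ∧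
    Y = ↑V ∪ ⋃ i, Set.range (e i)

theorem bundle_monodromy {X : Type} [TopologicalSpace X] {ι : Type} {G : Type} [Group G]
    (W : ι → Set X) (hWo : ∀ i, IsOpen (W i)) (hWc : ∀ x, ∃ i, x ∈ W i)
    (htriple : ∀ i j k, ∀ x, x ∈ W i → x ∈ W j → x ∈ W k → i = j ∨ j = k ∨ i = k)
    (a : ι → ι → G) (ha1 : ∀ i, a i i = 1)
    (ha2 : ∀ i j x, x ∈ W i → x ∈ W j → a i j * a j i = 1)
    {x y : X} (γ γ' : Path x y) (hγ : γ.Homotopic γ')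
    (g g' : unitInterval → ι → G)
    (hg : ∀ t i j, γ t ∈ W i → γ t ∈ W j → g t j = a i j * g t i)
    (hg' : ∀ t i j, γ' t ∈ W i → γ' t ∈ W j → g' t j = a i j * g' t i)
    (hgc : ∀ t i, γ t ∈ W i → ∀ᶠ s in nhds t, g s i = g t i)
    (hgc' : ∀ t i, γ' t ∈ W i → ∀ᶠ s in nhds t, g' s i = g' t i)
    (h0 : ∀ i, x ∈ W i → g 0 i = g' 0 i) :
    ∀ i, y ∈ W i → g 1 i = g' 1 i := by
  let _ : TopologicalSpace G := ⊥
  have : DiscreteTopology G := ⟨rfl⟩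
  choose idx hidx using hWc
  let Z : FiberBundleCore ι X G :=
    { baseSet := W
      isOpen_baseSet := hWo
      indexAt := idx
      mem_baseSet_at := hidx
      coordChange := fun i j _ v => a i j * v
      coordChange_self := by intro i x _ v; simp [ha1]
      continuousOn_coordChange := by
        intro i j
        apply Continuous.continuousOn
        exact (continuous_of_discreteTopology (f := fun v : G => a i j * v)).comp continuous_snd
      coordChange_comp := by
        rintro i j k x ⟨⟨hi, hj⟩, hk⟩ v
        rcases htriple i j k x hi hj hk with h | h | h
        · subst h; simp [ha1]
        · subst h; simp [ha1]
        · subst h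
          rw [← mul_assoc, ha2 j i x hj hi, ha1] }
  have cov : IsCoveringMap (Bundle.TotalSpace.proj : Z.TotalSpace → X) :=
    FiberBundle.isCoveringMap
  have key : ∀ (δ : Path x y) (g : unitInterval → ι → G),
      (∀ t i j, δ t ∈ W i → δ t ∈ W j → g t j = a i j * g t i) →
      (∀ t i, δ t ∈ W i → ∀ᶠ s in nhds t, g s i = g t i) →
      Continuous (fun t => (⟨δ t, g t (idx (δ t))⟩ : Z.TotalSpace)) := by
    intro δ g hg hgc
    rw [continuous_iff_continuousAt]
    intro t
    rw [FiberBundle.continuousAt_totalSpace]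
    refine ⟨δ.continuous.continuousAt, ?_⟩
    have h1 : ∀ᶠ s in nhds t, δ s ∈ W (idx (δ t)) :=
      δ.continuous.continuousAt.eventually ((hWo _).mem_nhds (hidx _))
    have h2 := hgc t (idx (δ t)) (hidx _)
    refine ContinuousAt.congr (f := fun _ => g t (idx (δ t))) continuousAt_const ?_
    filter_upwards [h1, h2] with s hs1 hs2
    have := hg s (idx (δ s)) (idx (δ t)) (hidx _) hs1
    rw [← hs2, this]
    rfl
  have hpt : ∀ (v : ι → G) (z w : X), z = w →
      (⟨z, v (idx z)⟩ : Z.TotalSpace) = ⟨w, v (idx w)⟩ := by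
    rintro v z _ rfl; rfl
  let Γ : C(unitInterval, Z.TotalSpace) := ⟨_, key γ g hg hgc⟩
  let Γ' : C(unitInterval, Z.TotalSpace) := ⟨_, key γ' g' hg' hgc'⟩
  let e : Z.TotalSpace := ⟨x, g 0 (idx x)⟩
  have hl : Γ = cov.liftPath γ.toContinuousMap e (by simp [e]) := by
    rw [cov.eq_liftPath_iff']
    refine ⟨rfl, ?_⟩
    exact hpt (g 0) _ _ γ.source
  have hl' : Γ' = cov.liftPath γ'.toContinuousMap e (by simp [e]) := by
    rw [cov.eq_liftPath_iff']
    refine ⟨rfl, ?_⟩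
    have : e = ⟨x, g' 0 (idx x)⟩ := by simp only [e, h0 _ (hidx x)]
    rw [this]
    exact hpt (g' 0) _ _ γ'.source
  have h1 : Γ 1 = Γ' 1 := by
    rw [hl, hl']
    exact cov.liftPath_apply_one_eq_of_homotopicRel hγ e _ _
  have h2 : g 1 (idx y) = g' 1 (idx y) := by
    have : Γ 1 = (⟨y, g 1 (idx y)⟩ : Z.TotalSpace) := hpt (g 1) _ _ γ.target
    have h3 : Γ' 1 = (⟨y, g' 1 (idx y)⟩ : Z.TotalSpace) := hpt (g' 1) _ _ γ'.target
    rw [this, h3] at h1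
    exact congrArg (fun q : Z.TotalSpace => (q.2 : G)) h1
  intro i hi
  rw [hg 1 (idx y) i (by simpa using hidx y) (by simpa using hi),
    hg' 1 (idx y) i (by simpa using hidx y) (by simpa using hi), h2]

/-- Paths with the same endpoints in a common small ball are homotopic. -/
def SmallHtpy (Y : Type) [MetricSpace Y] (δ : ℝ) : Prop :=
  ∀ (y a b : Y) (γ γ' : Path a b), range γ ⊆ Metric.ball y δ → range γ' ⊆ Metric.ball y δ →
    γ.Homotopic γ'

/-- Close points are joined by small paths. -/
def SmallJoin (Y : Type) [MetricSpace Y] (ε δ : ℝ) : Prop :=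
  ∀ y y' : Y, dist y y' < δ → ∃ γ : Path y y', range γ ⊆ Metric.ball y ε

theorem exists_smallHtpy (Y : Type) [MetricSpace Y] [CompactSpace Y]
    (h : ∀ y : Y, ∃ U : Set Y, IsOpen U ∧ y ∈ U ∧ ∀ (a b : Y) (γ γ' : Path a b),
      range γ ⊆ U → range γ' ⊆ U → γ.Homotopic γ') : ∃ δ > 0, SmallHtpy Y δ := by
  choose U hUo hyU hU using h
  obtain ⟨δ, hδ, H⟩ := lebesgue_number_lemma_of_metric (isCompact_univ (X := Y)) hUo
    (fun y _ => mem_iUnion.2 ⟨y, hyU y⟩)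
  refine ⟨δ, hδ, fun y a b γ γ' h1 h2 => ?_⟩
  obtain ⟨i, hi⟩ := H y (mem_univ _)
  exact hU i a b γ γ' (h1.trans hi) (h2.trans hi)

theorem exists_smallJoin (Y : Type) [MetricSpace Y] [CompactSpace Y] [LocallyPathConnectedSpace Y]
    {ε : ℝ} (hε : 0 < ε) : ∃ δ > 0, SmallJoin Y ε δ := by
  have h : ∀ y : Y, ∃ U : Set Y, IsOpen U ∧ y ∈ U ∧ IsPathConnected U ∧
      U ⊆ Metric.ball y (ε / 2) := by
    intro y
    obtain ⟨U, ⟨h1, h2, h3⟩, h4⟩ := (isOpen_isPathConnected_basis y).mem_iff.1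
      (Metric.ball_mem_nhds y (half_pos hε))
    exact ⟨U, h1, h2, h3, h4⟩
  choose U hUo hyU hU hUb using h
  obtain ⟨δ, hδ, H⟩ := lebesgue_number_lemma_of_metric (isCompact_univ (X := Y)) hUo
    (fun y _ => mem_iUnion.2 ⟨y, hyU y⟩)
  refine ⟨δ, hδ, fun y y' hyy => ?_⟩
  obtain ⟨i, hi⟩ := H y (mem_univ _)
  have hy1 : y ∈ U i := hi (Metric.mem_ball_self hδ)
  have hy2 : y' ∈ U i := hi (by rw [Metric.mem_ball, dist_comm]; exact hyy)
  obtain ⟨γ, hγ⟩ := (hU i).joinedIn y hy1 y' hy2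
  refine ⟨γ, ?_⟩
  rintro _ ⟨t, rfl⟩
  have h1 := hUb i (hγ t)
  have h2 := hUb i hy1
  rw [Metric.mem_ball] at *
  have := dist_triangle_right (γ t) y i
  linarith

theorem covering_smallHtpy {X : Type} [MetricSpace X] [CompactSpace X] [ConnectedSpace X]
    (hcov : ∃ (E : Type) (tE : TopologicalSpace E) (p : E → X),
      @IsCoveringMap E X tE _ p ∧ @SimplyConnectedSpace E tE) : ∃ δ > 0, SmallHtpy X δ := by
  obtain ⟨E, tE, p, hp, hE⟩ := hcov
  have hsurj : Function.Surjective p := by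
    rw [← range_eq_univ]
    have hcl : IsClopen (range p) := by
      refine ⟨⟨?_⟩, hp.isLocalHomeomorph.isOpenMap.isOpen_range⟩
      rw [isOpen_iff_mem_nhds]
      intro x hx
      obtain ⟨_, U, hxU, hUo, _, H, hH⟩ := hp x
      filter_upwards [hUo.mem_nhds hxU]
      rintro u hu ⟨e, rfl⟩
      exact hx ⟨(H ⟨e, hu⟩).2.1, (H ⟨e, hu⟩).2.2⟩
    exact hcl.eq_univ (range_nonempty p)
  apply exists_smallHtpy
  intro x
  obtain ⟨_, U, hxU, hUo, _, H, hH⟩ := hp x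
  refine ⟨U, hUo, hxU, ?_⟩
  intro a b γ γ' h1 h2
  obtain ⟨e0, he0⟩ := hsurj x
  let e1 : p ⁻¹' {x} := ⟨e0, he0⟩
  have haU : a ∈ U := by simpa using h1 ⟨0, rfl⟩
  have hbU : b ∈ U := by simpa using h1 ⟨1, rfl⟩
  have hpH : ∀ u : U, p (H.symm (u, e1)).1 = u := by
    intro u
    rw [← hH]; simp
  have key : ∀ γ : Path a b, range γ ⊆ U →
      ∃ Γ : Path (H.symm (⟨a, haU⟩, e1)).1 (H.symm (⟨b, hbU⟩, e1)).1, ∀ t, p (Γ t) = γ t := by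
    intro γ h
    refine ⟨⟨⟨fun t => (H.symm (⟨γ t, h ⟨t, rfl⟩⟩, e1)).1, ?_⟩, ?_, ?_⟩, ?_⟩
    · have := γ.continuous
      fun_prop
    · simp
    · simp
    · intro t
      exact hpH _
  obtain ⟨Γ, hΓ⟩ := key γ h1
  obtain ⟨Γ', hΓ'⟩ := key γ' h2
  have := (SimplyConnectedSpace.paths_homotopic Γ Γ').map ⟨p, hp.continuous⟩
  have := this.pathCast (hpH ⟨a, haU⟩).symm (hpH ⟨b, hbU⟩).symm
  convert this using 1
  · ext t; exact (hΓ t).symm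
  · ext t; exact (hΓ' t).symm

theorem exists_small_classes (Y : Type) [MetricSpace Y] [PathConnectedSpace Y]
    {δ₂ δ₃ : ℝ} (h2 : 0 < δ₂) (h3 : 0 < δ₃) (hH : SmallHtpy Y δ₂) (hJ : SmallJoin Y (δ₂ / 4) δ₃) :
    ∃ δ > 0, ∃ s : ∀ y y' : Y, Path.Homotopic.Quotient y y',
      (∀ (y y' : Y) (γ : Path y y'), range γ ⊆ Metric.ball y δ → Path.Homotopic.Quotient.mk γ = s y y') ∧
      (∀ y y' y'' : Y, dist y y' < δ → dist y' y'' < δ → dist y y'' < δ →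
        (s y y').trans (s y' y'') = s y y'') := by
  classical
  have h : ∀ y y' : Y, ∃ γ : Path y y', dist y y' < δ₃ → range γ ⊆ Metric.ball y (δ₂ / 4) := by
    intro y y'
    by_cases hd : dist y y' < δ₃
    · obtain ⟨γ, hγ⟩ := hJ y y' hd
      exact ⟨γ, fun _ => hγ⟩
    · exact ⟨PathConnectedSpace.somePath y y', fun h => absurd h hd⟩
  choose σ hσ using h
  refine ⟨min (δ₂ / 4) δ₃, lt_min (by linarith) h3, fun y y' => Path.Homotopic.Quotient.mk (σ y y'), ?_, ?_⟩
  · intro y y' γ hγ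
    have hd : dist y y' < δ₃ := by
      have := hγ ⟨1, rfl⟩
      rw [Path.target, Metric.mem_ball, dist_comm] at this
      exact this.trans_le (min_le_right _ _)
    apply Path.Homotopic.Quotient.eq.2
    refine hH y _ _ _ _ (hγ.trans (Metric.ball_subset_ball ?_))
      ((hσ y y' hd).trans (Metric.ball_subset_ball (by linarith)))
    exact (min_le_left _ _).trans (by linarith)
  · intro y y' y'' ha hb hc
    rw [← Path.Homotopic.Quotient.mk_trans]
    apply Path.Homotopic.Quotient.eq.2
    refine hH y _ _ _ _ ?_ ((hσ y y'' (hc.trans_le (min_le_right _ _))).trans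
      (Metric.ball_subset_ball (by linarith)))
    rw [Path.trans_range]
    refine union_subset ((hσ y y' (ha.trans_le (min_le_right _ _))).trans
      (Metric.ball_subset_ball (by linarith))) ?_
    refine (hσ y' y'' (hb.trans_le (min_le_right _ _))).trans
      (Metric.ball_subset_ball' ?_)
    have : dist y y' < δ₂ / 4 := ha.trans_le (min_le_left _ _)
    rw [dist_comm] at this
    linarith

theorem inclusion_injective {X : Type} [MetricSpace X] [CompactSpace X] (hdim : CovDimLE X 1)
    (Y : Set X) [PathConnectedSpace Y] {δ₂ δ₃ : ℝ} (h2 : 0 < δ₂) (h3 : 0 < δ₃)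
    (hH : SmallHtpy Y δ₂) (hJ : SmallJoin Y (δ₂ / 4) δ₃) (x₀ : Y) (γ γ' : Path x₀ x₀)
    (hγγ : (γ.map continuous_subtype_val).Homotopic (γ'.map continuous_subtype_val)) :
    γ.Homotopic γ' := by
  classical
  obtain ⟨δ, hδ, s, hs1, hs2⟩ := exists_small_classes Y h2 h3 hH hJ
  have hs0 : ∀ y, s y y = Path.Homotopic.Quotient.refl y := by
    intro y
    rw [← Path.Homotopic.Quotient.mk_refl]
    refine (hs1 y y (Path.refl y) ?_).symm
    rintro _ ⟨t, rfl⟩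
    simpa using hδ
  -- the cover
  obtain ⟨T, -, hTf, hT⟩ := (isCompact_univ (X := X)).finite_cover_balls (e := δ / 5) (by linarith)
  obtain ⟨V, hVf, hVo, hVc, hVr, hVn⟩ := hdim ((fun x => Metric.ball x (δ / 5)) '' T)
    (hTf.image _) (by rintro _ ⟨x, _, rfl⟩; exact Metric.isOpen_ball)
    (by
      rw [sUnion_image]
      exact univ_subset_iff.1 hT)
  have hclose1 : ∀ v ∈ V, ∀ x ∈ v, ∀ y ∈ v, dist x y < 2 * δ / 5 := by
    intro v hv x hx y hy
    obtain ⟨_, ⟨z, _, rfl⟩, hz⟩ := hVr v hv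
    have h1 := hz hx
    have h2 := hz hy
    rw [Metric.mem_ball] at h1 h2
    have := dist_triangle_right x y z
    linarith
  let ι := ↥V
  let W : ι → Set X := fun v => v.1
  have hclose : ∀ (u w : ι) (z : X), z ∈ W u → z ∈ W w → ∀ x ∈ W u, ∀ y ∈ W w, dist x y < δ := by
    intro u w z hzu hzw x hx y hy
    have h1 := hclose1 u u.2 x hx z hzu
    have h2 := hclose1 w w.2 z hzw y hy
    have := dist_triangle x z y
    linarith
  have htriple : ∀ i j k : ι, ∀ x, x ∈ W i → x ∈ W j → x ∈ W k → i = j ∨ j = k ∨ i = k := by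
    intro i j k x hi hj hk
    by_contra! hne
    obtain ⟨hij, hjk, hik⟩ := hne
    have hsub : ({i.1, j.1, k.1} : Set (Set X)) ⊆ {v ∈ V | x ∈ v} := by
      rintro v (rfl | rfl | rfl)
      exacts [⟨i.2, hi⟩, ⟨j.2, hj⟩, ⟨k.2, hk⟩]
    have hc := Set.ncard_le_ncard hsub (hVf.subset (sep_subset _ _))
    have h3 : ({i.1, j.1, k.1} : Set (Set X)).ncard = 3 := by
      rw [Set.ncard_eq_three]
      exact ⟨i.1, j.1, k.1, fun h => hij (Subtype.ext h), fun h => hik (Subtype.ext h),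
        fun h => hjk (Subtype.ext h), rfl⟩
    have := hVn x
    omega
  have hbp : ∀ i : ι, ∃ y : Y, (∃ y' : Y, y'.1 ∈ W i) → y.1 ∈ W i := by
    intro i
    by_cases h : ∃ y' : Y, y'.1 ∈ W i
    · obtain ⟨y', hy'⟩ := h
      exact ⟨y', fun _ => hy'⟩
    · exact ⟨x₀, fun h' => absurd h' h⟩
  choose b hb using hbp
  let c : ∀ y : Y, Path.Homotopic.Quotient x₀ y := fun y => Path.Homotopic.Quotient.mk (PathConnectedSpace.somePath x₀ y)
  let a : ι → ι → FundamentalGroup Y x₀ := fun i j =>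
    if (∃ y' : Y, y'.1 ∈ W i) ∧ (∃ y' : Y, y'.1 ∈ W j) then
      ((c (b i)).trans (s (b i) (b j))).trans (c (b j)).symm else 1
  let G : Path x₀ x₀ → unitInterval → ι → FundamentalGroup Y x₀ := fun γ t i =>
    (((Path.Homotopic.Quotient.mk (γ.subpath 0 t)).cast γ.source.symm rfl).trans (s (γ t) (b i))).trans
      (c (b i)).symm
  have hG1 : ∀ (γ : Path x₀ x₀) t i j, (γ t).1 ∈ W i → (γ t).1 ∈ W j →
      G γ t j = a i j * G γ t i := by
    intro γ t i j hi hj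
    have hei : ∃ y' : Y, y'.1 ∈ W i := ⟨_, hi⟩
    have hej : ∃ y' : Y, y'.1 ∈ W j := ⟨_, hj⟩
    have e1 := hs2 (γ t) (b i) (b j) (hclose i i _ hi hi _ hi _ (hb i hei))
      (hclose i j _ hi hj _ (hb i hei) _ (hb j hej)) (hclose j j _ hj hj _ hj _ (hb j hej))
    simp only [a, if_pos (And.intro hei hej), G, FundamentalGroup.mul_def]
    rw [← e1]
    simp only [Path.Homotopic.Quotient.trans_assoc]
    rw [← Path.Homotopic.Quotient.trans_assoc (c (b i)).symm, Path.Homotopic.Quotient.symm_trans, Path.Homotopic.Quotient.refl_trans]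
  have hG2 : ∀ (γ : Path x₀ x₀) t i, (γ t).1 ∈ W i → ∀ᶠ r in nhds t, G γ r i = G γ t i := by
    intro γ t i hi
    have hev : ∀ᶠ r in nhds t, γ r ∈ (Subtype.val ⁻¹' (W i) ∩ Metric.ball (γ t) (δ / 2) : Set Y) :=
      γ.continuous.continuousAt.eventually
        ((((hVo i.1 i.2).preimage continuous_subtype_val).inter Metric.isOpen_ball).mem_nhds
          ⟨hi, Metric.mem_ball_self (by linarith)⟩)
    obtain ⟨ρ, hρ, hball⟩ := Metric.eventually_nhds_iff_ball.1 hev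
    filter_upwards [Metric.ball_mem_nhds t hρ] with r hr
    have hin : ∀ u ∈ uIcc t r, u ∈ Metric.ball t ρ := by
      intro u hu
      rw [Metric.mem_ball, Subtype.dist_eq, Real.dist_eq] at hr ⊢
      refine lt_of_le_of_lt ?_ hr
      rw [mem_uIcc] at hu
      rcases hu with ⟨h1, h2⟩ | ⟨h1, h2⟩
      · have h1' : (t : ℝ) ≤ u := h1
        have h2' : (u : ℝ) ≤ r := h2
        rw [abs_of_nonneg (by linarith), abs_of_nonneg (by linarith)]; linarith
      · have h1' : (r : ℝ) ≤ u := h1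
        have h2' : (u : ℝ) ≤ t := h2
        rw [abs_of_nonpos (by linarith), abs_of_nonpos (by linarith)]; linarith
    have e1 : Path.Homotopic.Quotient.mk (γ.subpath t r) = s (γ t) (γ r) := by
      apply hs1
      rw [Path.range_subpath]
      rintro _ ⟨u, hu, rfl⟩
      exact Metric.ball_subset_ball (by linarith) (hball u (hin u hu)).2
    have hr' := (hball r hr).1
    have hbi := hb i ⟨_, hi⟩
    have e2 := hs2 (γ t) (γ r) (b i) (hclose i i _ hi hi _ hi _ hr')
      (hclose i i _ hi hi _ hr' _ hbi) (hclose i i _ hi hi _ hi _ hbi)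
    have e3 : (Path.Homotopic.Quotient.mk (γ.subpath 0 t)).trans (Path.Homotopic.Quotient.mk (γ.subpath t r)) =
        Path.Homotopic.Quotient.mk (γ.subpath 0 r) := by
      rw [← Path.Homotopic.Quotient.mk_trans]
      exact Path.Homotopic.Quotient.eq.2 ⟨Path.Homotopy.subpathTransSubpath γ 0 t r⟩
    simp only [G]
    rw [← e2, ← e1]
    congr 1
    rw [← Path.Homotopic.Quotient.trans_assoc]
    congr 1
    rw [← e3]
    generalize Path.Homotopic.Quotient.mk (γ.subpath 0 t) = q
    generalize Path.Homotopic.Quotient.mk (γ.subpath t r) = q'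
    revert q
    generalize_proofs h
    revert h
    generalize γ 0 = z
    rintro rfl q
    simp
  have hG0 : ∀ (γ : Path x₀ x₀) i, G γ 0 i = (s x₀ (b i)).trans (c (b i)).symm := by
    intro γ i
    simp only [G]
    congr 1
    rw [Path.subpath_self]
    have aux : ∀ (z : Y) (h : x₀ = z) (h' : z = z),
        ((Path.Homotopic.Quotient.mk (Path.refl z)).cast h h').trans (s z (b i)) = s x₀ (b i) := by
      rintro _ rfl _
      simp
    exact aux _ _ _
  have hGl : ∀ (γ : Path x₀ x₀) i, G γ 1 i =
      (Path.Homotopic.Quotient.mk γ).trans ((s x₀ (b i)).trans (c (b i)).symm) := by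
    intro γ i
    simp only [G]
    rw [← Path.Homotopic.Quotient.trans_assoc]
    congr 1
    rw [Path.subpath_zero_one, Path.Homotopic.Quotient.mk_cast, Path.Homotopic.Quotient.cast_cast]
    generalize_proofs h1 h2 h3
    generalize Path.Homotopic.Quotient.mk γ = q
    revert h1 h2 h3
    generalize γ 1 = z
    rintro _ h2 rfl
    simp
  have hcov : ∀ x, ∃ i, x ∈ W i := by
    intro x
    have : x ∈ ⋃₀ V := hVc ▸ mem_univ x
    obtain ⟨v, hv, hx⟩ := this
    exact ⟨⟨v, hv⟩, hx⟩
  have main := bundle_monodromy W (fun i => hVo i.1 i.2) hcov htriple a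
    (by
      intro i
      by_cases h : ∃ y' : Y, y'.1 ∈ W i
      · simp only [a, if_pos (And.intro h h), hs0, Path.Homotopic.Quotient.trans_refl, Path.Homotopic.Quotient.trans_symm]
        rfl
      · simp only [a]
        rw [if_neg (fun h' => h h'.1)])
    (by
      intro i j x hi hj
      by_cases h : (∃ y' : Y, y'.1 ∈ W i) ∧ (∃ y' : Y, y'.1 ∈ W j)
      · simp only [a, if_pos h, if_pos h.symm, FundamentalGroup.mul_def]
        have e2 := hs2 (b j) (b i) (b j) (hclose j i _ hj hi _ (hb j h.2) _ (hb i h.1))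
          (hclose i j _ hi hj _ (hb i h.1) _ (hb j h.2))
          (by simpa using hδ)
        rw [hs0] at e2
        simp only [Path.Homotopic.Quotient.trans_assoc]
        rw [← Path.Homotopic.Quotient.trans_assoc (c (b i)).symm, Path.Homotopic.Quotient.symm_trans, Path.Homotopic.Quotient.refl_trans,
          ← Path.Homotopic.Quotient.trans_assoc (s (b j) (b i)), e2, Path.Homotopic.Quotient.refl_trans, Path.Homotopic.Quotient.trans_symm]
        rfl
      · simp only [a]
        rw [if_neg h, if_neg (fun h' => h h'.symm), mul_one])
    _ _ hγγ (G γ) (G γ') (hG1 γ) (hG1 γ') (hG2 γ) (hG2 γ')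
    (by intro i _; rw [hG0, hG0])
  obtain ⟨i, hi⟩ := hcov x₀.1
  have := main i hi
  rw [hGl, hGl] at this
  have e : ∀ q : Path.Homotopic.Quotient x₀ x₀, (q.trans ((s x₀ (b i)).trans (c (b i)).symm)).trans
      (((s x₀ (b i)).trans (c (b i)).symm)).symm = q := by
    intro q
    rw [Path.Homotopic.Quotient.trans_assoc, Path.Homotopic.Quotient.trans_symm, Path.Homotopic.Quotient.trans_refl]
  apply Path.Homotopic.Quotient.eq.1
  rw [← e (Path.Homotopic.Quotient.mk γ), this, e]

/-- Closed subsets of the interval whose gaps are collapsed by `γ`. -/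
def GapFam {X : Type} (γ : unitInterval → X) : Set (Set unitInterval) :=
  {A | IsClosed A ∧ 0 ∈ A ∧ 1 ∈ A ∧
    ∀ s ∈ A, ∀ t ∈ A, s < t → (∀ u ∈ A, u ≤ s ∨ t ≤ u) → γ s = γ t}

theorem exists_minimal_gapFam {X : Type} [MetricSpace X] (γ : unitInterval → X)
    (hγ : Continuous γ) : ∃ A, Minimal (fun A => A ∈ GapFam γ) A := by
  apply zorn_superset
  intro c hc hch
  rcases c.eq_empty_or_nonempty with rfl | hne
  · refine ⟨univ, ⟨isClosed_univ, mem_univ _, mem_univ _, ?_⟩, by simp⟩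
    intro s _ t _ hst h
    obtain ⟨u, hu1, hu2⟩ := exists_between hst
    rcases h u (mem_univ _) with h | h
    · exact absurd h (not_le.2 hu1)
    · exact absurd h (not_le.2 hu2)
  refine ⟨⋂₀ c, ⟨isClosed_sInter fun A hA => (hc hA).1, fun A hA => (hc hA).2.1,
    fun A hA => (hc hA).2.2.1, ?_⟩, fun A hA => sInter_subset_of_mem hA⟩
  intro s hs t ht hst hgap
  by_contra hne'
  obtain ⟨U, V, hU, hV, hsU, htV, hUV⟩ := t2_separation hne'
  have h1 : ∀ᶠ u in nhds s, γ u ∈ U := hγ.continuousAt.eventually (hU.mem_nhds hsU)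
  have h2 : ∀ᶠ u in nhds t, γ u ∈ V := hγ.continuousAt.eventually (hV.mem_nhds htV)
  obtain ⟨r, hr1, hr2⟩ := exists_between hst
  obtain ⟨u1, hu1, hu1'⟩ := exists_Ico_subset_of_mem_nhds' h1 hr1
  obtain ⟨l1, hl1, hl1'⟩ := exists_Ioc_subset_of_mem_nhds' h2 hr2
  obtain ⟨s1, hs1, hs1'⟩ := exists_between hu1.1
  obtain ⟨t1, ht1, ht1'⟩ := exists_between hl1.2
  have hst1 : s1 < t1 := hs1'.trans (hu1.2.trans_lt (hl1.1.trans_lt ht1))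
  have : Nonempty c := hne.to_subtype
  obtain ⟨⟨A, hA⟩, hAe⟩ := (isCompact_Icc (a := s1) (b := t1)).elim_directed_family_closed
    (fun A : c => A.1) (fun A => (hc A.2).1) (by
      rw [eq_empty_iff_forall_notMem]
      rintro u ⟨hu, hu'⟩
      rw [← sInter_eq_iInter] at hu'
      rcases hgap u hu' with h | h
      · exact absurd (hs1.trans_le hu.1) (not_lt.2 h)
      · exact absurd (hu.2.trans_lt ht1') (not_lt.2 h))
    (by
      rintro ⟨A, hA⟩ ⟨B, hB⟩
      rcases hch.total hA hB with h | h
      · exact ⟨⟨A, hA⟩, subset_rfl, h⟩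
      · exact ⟨⟨B, hB⟩, h, subset_rfl⟩)
  have hAc := (hc hA).1
  obtain ⟨s', hs'⟩ := (hAc.inter isClosed_Iic).isCompact.exists_isGreatest
    (⟨s, hs A hA, hs1.le⟩ : (A ∩ Iic s1).Nonempty)
  obtain ⟨t', ht'⟩ := (hAc.inter isClosed_Ici).isCompact.exists_isLeast
    (⟨t, ht A hA, ht1'.le⟩ : (A ∩ Ici t1).Nonempty)
  have e := (hc hA).2.2.2 s' hs'.1.1 t' ht'.1.1
    (lt_of_le_of_lt hs'.1.2 (hst1.trans_le ht'.1.2)) (by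
      intro u hu
      by_cases h : u ≤ s1
      · exact Or.inl (hs'.2 ⟨hu, h⟩)
      by_cases h' : t1 ≤ u
      · exact Or.inr (ht'.2 ⟨hu, h'⟩)
      have : u ∈ Icc s1 t1 ∩ A := ⟨⟨(not_le.1 h).le, (not_le.1 h').le⟩, hu⟩
      rw [hAe] at this
      exact this.elim)
  have m1 : γ s' ∈ U := hu1' ⟨hs'.2 ⟨hs A hA, hs1.le⟩, lt_of_le_of_lt hs'.1.2 hs1'⟩
  have m2 : γ t' ∈ V := hl1' ⟨lt_of_lt_of_le ht1 ht'.1.2, ht'.2 ⟨ht A hA, ht1'.le⟩⟩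
  rw [← e] at m2
  exact hUV.le_bot ⟨m1, m2⟩

theorem minimal_gapFam {X : Type} {γ : unitInterval → X} {A : Set unitInterval}
    (hA : Minimal (fun A => A ∈ GapFam γ) A) {s t u : unitInterval} (hs : s ∈ A) (ht : t ∈ A)
    (hu : u ∈ A) (hsu : s < u) (hut : u < t) : γ s ≠ γ t := by
  intro hst
  have hB : A \ Ioo s t ∈ GapFam γ := by
    obtain ⟨h1, h2, h3, h4⟩ := hA.1
    refine ⟨h1.sdiff isOpen_Ioo, ⟨h2, fun h => absurd h.1 (not_lt.2 unitInterval.nonneg')⟩,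
      ⟨h3, fun h => absurd h.2 (not_lt.2 unitInterval.le_one')⟩, ?_⟩
    rintro s' ⟨hs', hs''⟩ t' ⟨ht', ht''⟩ hst' hgap
    by_cases hg : ∀ u ∈ A, u ≤ s' ∨ t' ≤ u
    · exact h4 s' hs' t' ht' hst' hg
    push Not at hg
    obtain ⟨v, hv, hv1, hv2⟩ := hg
    have hv3 : v ∈ Ioo s t := by
      by_contra h
      rcases hgap v ⟨hv, h⟩ with h | h
      · exact absurd hv1 (not_lt.2 h)
      · exact absurd hv2 (not_lt.2 h)
    have hgs := hgap s ⟨hs, fun h => lt_irrefl _ h.1⟩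
    have hgt := hgap t ⟨ht, fun h => lt_irrefl _ h.2⟩
    have e1 : s' = s := by
      apply le_antisymm
      · by_contra h
        exact hs'' ⟨not_le.1 h, hv1.trans hv3.2⟩
      · rcases hgs with h | h
        · exact h
        · exact absurd (hv3.1.trans (hv2.trans_le h)) (lt_irrefl _)
    have e2 : t' = t := by
      apply le_antisymm
      · rcases hgt with h | h
        · exact absurd (hv3.2.trans_le (h.trans hv1.le)) (lt_irrefl _)
        · exact h
      · by_contra h
        exact ht'' ⟨hv3.1.trans hv2, not_le.1 h⟩
    rw [e1, e2, hst]
  exact (hA.2 hB sdiff_subset hu).2 ⟨hsu, hut⟩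

theorem exists_monotone_light {X : Type} [MetricSpace X] (γ : unitInterval → X)
    (hγ : Continuous γ) : ∃ f : unitInterval → X, Continuous f ∧ f 0 = γ 0 ∧ f 1 = γ 1 ∧
      range f ⊆ range γ ∧ ∀ s u t, s ≤ u → u ≤ t → f s = f t → f u = f s := by
  obtain ⟨A, hA⟩ := exists_minimal_gapFam γ hγ
  obtain ⟨hAc, hA0, hA1, hAg⟩ := hA.1
  have hρ : ∀ t : unitInterval, ∃ r, IsGreatest (A ∩ Iic t) r := fun t =>
    (hAc.inter isClosed_Iic).isCompact.exists_isGreatest ⟨0, hA0, unitInterval.nonneg'⟩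
  have hσ : ∀ t : unitInterval, ∃ r, IsLeast (A ∩ Ici t) r := fun t =>
    (hAc.inter isClosed_Ici).isCompact.exists_isLeast ⟨1, hA1, unitInterval.le_one'⟩
  choose ρ hρ using hρ
  choose σ hσ using hσ
  have hρA : ∀ t ∈ A, ρ t = t := fun t ht => le_antisymm (hρ t).1.2 ((hρ t).2 ⟨ht, mem_Iic.2 le_rfl⟩)
  have hσA : ∀ t ∈ A, σ t = t := fun t ht => le_antisymm ((hσ t).2 ⟨ht, mem_Ici.2 le_rfl⟩) (hσ t).1.2
  have hmono : ∀ s t, s ≤ t → ρ s ≤ ρ t := fun s t hst =>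
    (hρ t).2 ⟨(hρ s).1.1, (hρ s).1.2.trans hst⟩
  have hρσ : ∀ t, γ (ρ t) = γ (σ t) := by
    intro t
    by_cases ht : t ∈ A
    · rw [hρA t ht, hσA t ht]
    refine hAg _ (hρ t).1.1 _ (hσ t).1.1 ?_ ?_
    · refine lt_of_le_of_ne ((hρ t).1.2.trans (hσ t).1.2) ?_
      intro h
      apply ht
      have : ρ t = t := le_antisymm (hρ t).1.2 (h ▸ (hσ t).1.2)
      exact this ▸ (hρ t).1.1
    · intro u hu
      rcases le_total u t with h | h
      · exact Or.inl ((hρ t).2 ⟨hu, h⟩)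
      · exact Or.inr ((hσ t).2 ⟨hu, h⟩)
  have key : ∀ s t, s ≤ t → γ (ρ s) = γ (ρ t) ∨
      ∃ s' ∈ Icc s t, ∃ t' ∈ Icc s t, γ (ρ s) = γ s' ∧ γ (ρ t) = γ t' := by
    intro s t hst
    by_cases h : ρ t ≤ s
    · left
      rw [le_antisymm (hmono s t hst) ((hρ s).2 ⟨(hρ t).1.1, h⟩)]
    · right
      have h := (not_le.1 h).le
      exact ⟨σ s, ⟨(hσ s).1.2, ((hσ s).2 ⟨(hρ t).1.1, h⟩).trans (hρ t).1.2⟩, ρ t,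
        ⟨h, (hρ t).1.2⟩, hρσ s, rfl⟩
  refine ⟨fun t => γ (ρ t), ?_, by simp only [hρA 0 hA0], by simp only [hρA 1 hA1], ?_, ?_⟩
  · have huc := CompactSpace.uniformContinuous_of_continuous hγ
    apply UniformContinuous.continuous
    rw [Metric.uniformContinuous_iff] at huc ⊢
    intro ε hε
    obtain ⟨δ, hδ, h⟩ := huc ε hε
    refine ⟨δ, hδ, ?_⟩
    have main : ∀ a b : unitInterval, a ≤ b → dist a b < δ → dist (γ (ρ a)) (γ (ρ b)) < ε := by
      intro a b hab hd
      rcases key a b hab with e | ⟨s', hs', t', ht', e1, e2⟩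
      · rw [e, dist_self]; exact hε
      · rw [e1, e2]
        apply h
        rw [Subtype.dist_eq] at hd ⊢
        exact lt_of_le_of_lt (Real.dist_le_of_mem_Icc (x' := (a:ℝ)) (y' := (b:ℝ)) ⟨hs'.1, hs'.2⟩
          ⟨ht'.1, ht'.2⟩) (by rwa [dist_comm, Real.dist_eq, abs_of_nonneg (sub_nonneg.2 (Subtype.coe_le_coe.2 hab))] at hd)
    intro a b hd
    rcases le_total a b with hab | hab
    · exact main a b hab hd
    · rw [dist_comm] at hd ⊢
      exact main b a hab hd
  · rintro _ ⟨t, rfl⟩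
    exact ⟨ρ t, rfl⟩
  · intro s u t hsu hut e
    by_contra hne
    have h1 : ρ s < ρ u := lt_of_le_of_ne (hmono _ _ hsu) fun h => hne (by simp only [h])
    have h2 : ρ u < ρ t := lt_of_le_of_ne (hmono _ _ hut) fun h => hne (by simp only [h, e])
    exact minimal_gapFam hA (hρ s).1.1 (hρ t).1.1 (hρ u).1.1 h1 h2 e

theorem exists_arc_of_monotone_light {X : Type} [MetricSpace X] [CompactSpace X]
    (f : unitInterval → X) (hf : Continuous f) (h01 : f 0 ≠ f 1)
    (hconv : ∀ s u t, s ≤ u → u ≤ t → f s = f t → f u = f s) :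
    ∃ α : unitInterval → X, Continuous α ∧ Function.Injective α ∧ α 0 = f 0 ∧ α 1 = f 1 ∧
      range α = range f := by
  have : Nonempty X := ⟨f 0⟩
  let d := TopologicalSpace.denseSeq X
  have hd := TopologicalSpace.denseRange_denseSeq X
  let m : ℕ → unitInterval → ℝ := fun n t => Metric.infDist (d n) (f '' Iic t)
  have hne : ∀ t, (f '' Iic t).Nonempty := fun t => ⟨f t, t, mem_Iic.2 le_rfl, rfl⟩
  have hm0 : ∀ n t, 0 ≤ m n t := fun n t => Metric.infDist_nonneg
  obtain ⟨C, hC⟩ : ∃ C, ∀ x y : X, dist x y ≤ C :=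
    ⟨_, fun x y => Metric.dist_le_diam_of_mem (isCompact_univ.isBounded) (mem_univ x) (mem_univ y)⟩
  have hmC : ∀ n t, m n t ≤ C := fun n t =>
    (Metric.infDist_le_dist_of_mem (show f t ∈ f '' Iic t from ⟨t, mem_Iic.2 le_rfl, rfl⟩)).trans (hC _ _)
  have hmc : ∀ n, Continuous (m n) := by
    intro n
    have h := IsCompact.continuous_sInf (f := fun (t : unitInterval) (r : unitInterval) =>
      dist (d n) (f (r * t))) (isCompact_univ (X := unitInterval))
      (by
        simp only [Function.HasUncurry.uncurry, id]
        fun_prop)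
    convert! h using 2 with t
    have hset : f '' Iic t = range (fun r : unitInterval => f (r * t)) := by
      ext x
      constructor
      · rintro ⟨u, hu, rfl⟩
        have hu' : (u : ℝ) ≤ t := hu
        by_cases ht : (t : ℝ) = 0
        · refine ⟨0, ?_⟩
          have : u = 0 := Subtype.ext (le_antisymm (hu'.trans ht.le) u.2.1)
          simp [this]
        · have htp : (0 : ℝ) < t := lt_of_le_of_ne t.2.1 (Ne.symm ht)
          refine ⟨⟨u / t, div_nonneg u.2.1 htp.le, (div_le_one htp).2 hu'⟩, ?_⟩
          refine congrArg f (Subtype.ext ?_)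
          simp only [Set.Icc.coe_mul]
          field_simp
      · rintro ⟨r, rfl⟩
        exact ⟨r * t, unitInterval.mul_le_right, rfl⟩
    apply le_antisymm
    · apply le_csInf (univ_nonempty.image _)
      rintro _ ⟨r, -, rfl⟩
      apply Metric.infDist_le_dist_of_mem
      rw [hset]
      exact ⟨r, rfl⟩
    · refine (Metric.le_infDist (hne t)).2 ?_
      rw [hset]
      rintro _ ⟨r, rfl⟩
      exact csInf_le ⟨0, by rintro _ ⟨r, -, rfl⟩; exact dist_nonneg⟩ ⟨r, mem_univ _, rfl⟩
  have hanti : ∀ n s t, s ≤ t → m n t ≤ m n s := fun n s t hst =>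
    Metric.infDist_le_infDist_of_subset (image_mono (Iic_subset_Iic.2 hst)) (hne s)
  have hsum : ∀ t, Summable (fun n => (1 / 2 : ℝ) ^ n * m n t) := fun t =>
    Summable.of_nonneg_of_le (fun n => mul_nonneg (by positivity) (hm0 n t))
      (fun n => mul_le_mul_of_nonneg_left (hmC n t) (by positivity)) (summable_geometric_two.mul_right C)
  let g : unitInterval → ℝ := fun t => ∑' n, (1 / 2 : ℝ) ^ n * m n t
  have hgc : Continuous g := by
    apply continuous_tsum (u := fun n => (1 / 2 : ℝ) ^ n * C)
    · intro n
      exact continuous_const.mul (hmc n)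
    · exact summable_geometric_two.mul_right C
    · intro n t
      rw [Real.norm_of_nonneg (mul_nonneg (by positivity) (hm0 n t))]
      exact mul_le_mul_of_nonneg_left (hmC n t) (by positivity)
  have hganti : ∀ s t, s ≤ t → g t ≤ g s := fun s t hst =>
    (hsum t).tsum_le_tsum (fun n => mul_le_mul_of_nonneg_left (hanti n s t hst) (by positivity)) (hsum s)
  have hgeq : ∀ s t, s ≤ t → f s = f t → g s = g t := by
    intro s t hst e
    have : f '' Iic s = f '' Iic t := by
      apply subset_antisymm (image_mono (Iic_subset_Iic.2 hst))
      rintro _ ⟨u, hu, rfl⟩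
      rcases le_total u s with h | h
      · exact ⟨u, h, rfl⟩
      · exact ⟨s, mem_Iic.2 le_rfl, (hconv s u t h hu e).symm⟩
    simp only [g, m, this]
  have hglt : ∀ s t, s ≤ t → f s ≠ f t → g t < g s := by
    intro s t hst e
    have hnot : f t ∉ f '' Iic s := by
      rintro ⟨r, hr, er⟩
      exact e ((hconv r s t hr hst er).trans er)
    have hcl : IsCompact (f '' Iic s) := isClosed_Iic.isCompact.image hf
    have hpos : 0 < Metric.infDist (f t) (f '' Iic s) :=
      (hcl.isClosed.notMem_iff_infDist_pos (hne s)).1 hnot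
    obtain ⟨n, hn⟩ := hd.exists_dist_lt (f t) (half_pos hpos)
    refine Summable.tsum_lt_tsum (i := n)
      (fun n => mul_le_mul_of_nonneg_left (hanti n s t hst) (by positivity)) ?_ (hsum t) (hsum s)
    refine mul_lt_mul_of_pos_left ?_ (by positivity)
    have h1 : m n t ≤ dist (d n) (f t) :=
      Metric.infDist_le_dist_of_mem ⟨t, mem_Iic.2 le_rfl, rfl⟩
    have h2 : Metric.infDist (f t) (f '' Iic s) ≤ m n s + dist (f t) (d n) :=
      Metric.infDist_le_infDist_add_dist
    rw [dist_comm] at h1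
    have h3 : dist (f t) (d n) < Metric.infDist (f t) (f '' Iic s) / 2 := hn
    linarith
  have hD : 0 < g 0 - g 1 := sub_pos.2 (hglt 0 1 unitInterval.le_one' h01)
  let φ : unitInterval → unitInterval := fun t => ⟨(g 0 - g t) / (g 0 - g 1),
    div_nonneg (sub_nonneg.2 (hganti 0 t unitInterval.nonneg')) hD.le,
    (div_le_one hD).2 (by linarith [hganti t 1 unitInterval.le_one'])⟩
  have hφc : Continuous φ := by
    apply Continuous.subtype_mk
    exact (continuous_const.sub hgc).div_const _
  have hφ0 : φ 0 = 0 := Subtype.ext (by simp [φ])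
  have hφ1 : φ 1 = 1 := Subtype.ext (by simp only [φ]; exact div_self hD.ne')
  have hφs : Function.Surjective φ := by
    intro y
    have := intermediate_value_univ (0 : unitInterval) 1 hφc
    rw [hφ0, hφ1] at this
    exact this ⟨unitInterval.nonneg', unitInterval.le_one'⟩
  have hφf : ∀ s t, φ s = φ t ↔ f s = f t := by
    have e1 : ∀ s t, φ s = φ t ↔ g s = g t := by
      intro s t
      rw [Subtype.ext_iff]
      simp only [φ]
      rw [div_left_inj' hD.ne']
      constructor <;> intro h <;> linarith
    have e2 : ∀ s t, s ≤ t → (φ s = φ t ↔ f s = f t) := by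
      intro s t hst
      rw [e1]
      refine ⟨fun h => ?_, hgeq s t hst⟩
      by_contra h'
      exact (hglt s t hst h').ne h.symm
    intro s t
    rcases le_total s t with h | h
    · exact e2 s t h
    · rw [eq_comm, e2 t s h, eq_comm]
  have hq : Topology.IsQuotientMap φ := hφc.isClosedMap.isQuotientMap hφc hφs
  let α : unitInterval → X := fun y => f (Function.surjInv hφs y)
  have hαφ : ∀ t, α (φ t) = f t := fun t => (hφf _ _).1 (Function.surjInv_eq hφs (φ t))
  refine ⟨α, ?_, ?_, ?_, ?_, ?_⟩
  · rw [hq.continuous_iff]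
    exact hf.congr fun t => (hαφ t).symm
  · intro a b hab
    obtain ⟨s, rfl⟩ := hφs a
    obtain ⟨t, rfl⟩ := hφs b
    rw [hαφ, hαφ] at hab
    exact (hφf s t).2 hab
  · exact (congrArg α hφ0).symm.trans (hαφ 0)
  · exact (congrArg α hφ1).symm.trans (hαφ 1)
  · apply subset_antisymm
    · rintro _ ⟨y, rfl⟩
      exact ⟨_, rfl⟩
    · rintro _ ⟨t, rfl⟩
      exact ⟨φ t, hαφ t⟩

theorem exists_arc_of_path {X : Type} [MetricSpace X] [CompactSpace X] {a b : X} (hab : a ≠ b)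
    (γ : Path a b) : ∃ α : Path a b, Function.Injective α ∧ range α ⊆ range γ := by
  obtain ⟨f, hf, hf0, hf1, hr, hconv⟩ := exists_monotone_light γ γ.continuous
  rw [γ.source] at hf0
  rw [γ.target] at hf1
  obtain ⟨α, hα, hinj, h0, h1, hr'⟩ := exists_arc_of_monotone_light f hf (by rwa [hf0, hf1]) hconv
  exact ⟨⟨⟨α, hα⟩, h0.trans hf0, h1.trans hf1⟩, hinj, (hr'.trans_subset hr)⟩

/-- A finite graph with arbitrary index type of edges. -/
structure GraphOn {X : Type} [TopologicalSpace X] {ι : Type} (V : Set X)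
    (e : ι → C(unitInterval, X)) (Y : Set X) : Prop where
  fin : V.Finite
  inj : ∀ i, Function.Injective (e i)
  zero_mem : ∀ i, e i 0 ∈ V
  one_mem : ∀ i, e i 1 ∈ V
  int : ∀ i t, e i t ∈ V → t = 0 ∨ t = 1
  disj : ∀ i j, i ≠ j → ∀ x, x ∈ range (e i) → x ∈ range (e j) → x ∈ V
  eq : Y = V ∪ ⋃ i, range (e i)

theorem invFun_continuousOn {X : Type} [TopologicalSpace X] [T2Space X] (e : C(unitInterval, X))
    (he : Function.Injective e) : ContinuousOn (Function.invFun e) (range e) := by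
  have h : Topology.IsClosedEmbedding e := e.continuous.isClosedEmbedding he
  rw [h.isInducing.continuousOn_iff]
  exact continuousOn_id.congr fun x hx => Function.invFun_eq hx

theorem cone_contractible {X : Type} [TopologicalSpace X] [T2Space X] {J : Type} [Finite J] (v : X)
    (k : J → C(unitInterval, X)) (hinj : ∀ j, Function.Injective (k j)) (h0 : ∀ j, k j 0 = v)
    (hdisj : ∀ i j, i ≠ j → ∀ x, x ∈ range (k i) → x ∈ range (k j) → x = v) :
    ContractibleSpace ↥({v} ∪ ⋃ j, range (k j) : Set X) := by
  classical
  set K : Set X := {v} ∪ ⋃ j, range (k j) with hK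
  let F : unitInterval × X → X := fun p =>
    if h : ∃ j, p.2 ∈ range (k j) then k h.choose (p.1 * Function.invFun (k h.choose) p.2) else v
  have hinv : ∀ j, Function.invFun (k j) v = 0 := by
    intro j
    rw [← h0 j]
    exact Function.leftInverse_invFun (hinj j) 0
  have hFj : ∀ j r x, x ∈ range (k j) → F (r, x) = k j (r * Function.invFun (k j) x) := by
    intro j r x hx
    have h : ∃ j, x ∈ range (k j) := ⟨j, hx⟩
    have hc := h.choose_spec
    simp only [F, dif_pos h]
    generalize h.choose = j' at hc
    by_cases hj : j' = j
    · rw [hj]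
    · have hxv := hdisj _ _ hj x hc hx
      rw [hxv, hinv, hinv, mul_zero, h0, h0]
  have hFv : ∀ r, F (r, v) = v := by
    intro r
    by_cases h : ∃ j, v ∈ range (k j)
    · obtain ⟨j, hj⟩ := h
      rw [hFj j r v hj, hinv, mul_zero, h0]
    · simp only [F]
      rw [dif_neg h]
  have hFc : ContinuousOn F (univ ×ˢ K) := by
    have hU : (univ ×ˢ K : Set (unitInterval × X)) =
        ⋃ o : Option J, univ ×ˢ (o.elim {v} (fun j => range (k j))) := by
      rw [← prod_iUnion, iUnion_option]
      rfl
    rw [hU]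
    apply LocallyFinite.continuousOn_iUnion (locallyFinite_of_finite _)
    · rintro (_ | j)
      · exact isClosed_univ.prod isClosed_singleton
      · exact isClosed_univ.prod (isCompact_range (k j).continuous).isClosed
    · rintro (_ | j)
      · apply continuousOn_const (c := v) |>.congr
        rintro ⟨r, x⟩ ⟨-, hx⟩
        have : x = v := hx
        rw [this, hFv]
      · have h1 : ContinuousOn (fun p : unitInterval × X => k j (p.1 * Function.invFun (k j) p.2))
            (univ ×ˢ range (k j)) := by
          apply (k j).continuous.comp_continuousOn
          apply continuousOn_fst.mul
          exact (invFun_continuousOn (k j) (hinj j)).comp continuousOn_snd fun p hp => hp.2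
        exact h1.congr fun p hp => hFj j p.1 p.2 hp.2
  have hmem : ∀ r x, x ∈ K → F (r, x) ∈ K := by
    rintro r x (hx | hx)
    · have : x = v := hx
      rw [this, hFv]
      exact Or.inl rfl
    · obtain ⟨j, hj⟩ := mem_iUnion.1 hx
      rw [hFj j r x hj]
      exact Or.inr (mem_iUnion.2 ⟨j, _, rfl⟩)
  have hF1 : ∀ x ∈ K, F (1, x) = x := by
    rintro x (hx | hx)
    · have : x = v := hx
      rw [this, hFv]
    · obtain ⟨j, hj⟩ := mem_iUnion.1 hx
      rw [hFj j 1 x hj, one_mul]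
      exact Function.invFun_eq hj
  have hF0 : ∀ x ∈ K, F (0, x) = v := by
    rintro x (hx | hx)
    · have : x = v := hx
      rw [this, hFv]
    · obtain ⟨j, hj⟩ := mem_iUnion.1 hx
      rw [hFj j 0 x hj, zero_mul, h0]
  rw [contractible_iff_id_nullhomotopic]
  refine ⟨⟨v, Or.inl rfl⟩, ⟨ContinuousMap.Homotopy.symm
    { toFun := fun p => ⟨F (p.1, p.2.1), hmem _ _ p.2.2⟩
      continuous_toFun := ?_
      map_zero_left := fun x => Subtype.ext (hF0 _ x.2)
      map_one_left := fun x => Subtype.ext (hF1 _ x.2) }⟩⟩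
  apply Continuous.subtype_mk
  exact hFc.comp_continuous (continuous_fst.prodMk (continuous_subtype_val.comp continuous_snd))
    fun p => ⟨mem_univ _, p.2.2⟩

theorem GraphOn.isCompact {X : Type} [TopologicalSpace X] {ι : Type} [Finite ι] {V : Set X}
    {e : ι → C(unitInterval, X)} {Y : Set X} (h : GraphOn V e Y) : IsCompact Y := by
  rw [h.eq]
  exact h.fin.isCompact.union (isCompact_iUnion fun i => isCompact_range (e i).continuous)

theorem GraphOn.locallyPathConnected {X : Type} [TopologicalSpace X] [T2Space X] {ι : Type} [Finite ι]
    {V : Set X} {e : ι → C(unitInterval, X)} {Y : Set X} (h : GraphOn V e Y) :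
    LocallyPathConnectedSpace Y := by
  have : Finite V := h.fin.to_subtype
  have hV : V ⊆ Y := by rw [h.eq]; exact subset_union_left
  have he : ∀ i t, e i t ∈ Y := fun i t => by
    rw [h.eq]; exact Or.inr (mem_iUnion.2 ⟨i, t, rfl⟩)
  let q : V ⊕ (Σ _ : ι, unitInterval) → Y :=
    Sum.elim (fun v => ⟨v.1, hV v.2⟩) (fun p => ⟨e p.1 p.2, he p.1 p.2⟩)
  have hq : Continuous q := by
    apply Continuous.sumElim
    · exact Continuous.subtype_mk continuous_subtype_val _
    · apply continuous_sigma
      intro i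
      exact Continuous.subtype_mk (e i).continuous _
  have hs : Function.Surjective q := by
    rintro ⟨y, hy⟩
    rw [h.eq] at hy
    rcases hy with hy | hy
    · exact ⟨Sum.inl ⟨y, hy⟩, rfl⟩
    · obtain ⟨i, t, rfl⟩ := mem_iUnion.1 hy
      exact ⟨Sum.inr ⟨i, t⟩, rfl⟩
  have : LocallyPathConnectedSpace unitInterval := (convex_Icc (0:ℝ) 1).locallyPathConnectedSpace
  exact (hq.isClosedMap.isQuotientMap hq hs).locallyPathConnectedSpace

/-- Restriction of a parametrised curve to a subinterval, reparametrised. -/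
def subArc {X : Type} [TopologicalSpace X] (e : C(unitInterval, X)) (a b : unitInterval) :
    C(unitInterval, X) :=
  ((⟨e, rfl, rfl⟩ : Path (e 0) (e 1)).subpath a b).toContinuousMap

theorem subArc_apply {X : Type} [TopologicalSpace X] (e : C(unitInterval, X)) (a b t : unitInterval) :
    subArc e a b t = e (Icc.convexComb a b t) := rfl

theorem subArc_zero {X : Type} [TopologicalSpace X] (e : C(unitInterval, X)) (a b : unitInterval) :
    subArc e a b 0 = e a := by
  rw [subArc_apply]; congr 1; apply Subtype.ext; simp

theorem subArc_one {X : Type} [TopologicalSpace X] (e : C(unitInterval, X)) (a b : unitInterval) :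
    subArc e a b 1 = e b := by
  rw [subArc_apply]; congr 1; apply Subtype.ext; simp

theorem convexComb_inj {a b s t : unitInterval} (hab : a ≠ b)
    (h : Icc.convexComb a b s = Icc.convexComb a b t) : s = t := by
  have h' := congrArg Subtype.val h
  simp only [Icc.coe_convexComb] at h'
  apply Subtype.ext
  have hne : (b : ℝ) - a ≠ 0 := sub_ne_zero.2 fun h => hab (Subtype.ext h.symm)
  have : ((b : ℝ) - a) * s = (b - a) * t := by linarith
  exact mul_left_cancel₀ hne this

theorem subArc_injective {X : Type} [TopologicalSpace X] {e : C(unitInterval, X)}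
    (he : Function.Injective e) {a b : unitInterval} (hab : a ≠ b) :
    Function.Injective (subArc e a b) := fun _ _ h => convexComb_inj hab (he h)

theorem range_subArc {X : Type} [TopologicalSpace X] (e : C(unitInterval, X)) {a b : unitInterval}
    (hab : a ≤ b) : range (subArc e a b) = e '' Icc a b :=
  Path.range_subpath_of_le (⟨e, rfl, rfl⟩ : Path (e 0) (e 1)) a b hab

theorem convexComb_eq_left {a b s : unitInterval} (hab : a ≠ b)
    (h : Icc.convexComb a b s = a) : s = 0 := by
  apply convexComb_inj hab
  rw [h]; apply Subtype.ext; simp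

theorem convexComb_eq_right {a b s : unitInterval} (hab : a ≠ b)
    (h : Icc.convexComb a b s = b) : s = 1 := by
  apply convexComb_inj hab
  rw [h]; apply Subtype.ext; simp

theorem convexComb_mem {a b : unitInterval} (hab : a ≤ b) (s : unitInterval) :
    Icc.convexComb a b s ∈ Icc a b := by
  have hab' : (a : ℝ) ≤ b := hab
  have h0 := s.2.1
  have h1 := s.2.2
  constructor <;> apply Subtype.coe_le_coe.1 <;> rw [Icc.coe_convexComb] <;> nlinarith

theorem GraphOn.subset_V {X : Type} [TopologicalSpace X] {ι : Type} {V : Set X}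
    {e : ι → C(unitInterval, X)} {Y : Set X} (h : GraphOn V e Y) : V ⊆ Y := by
  rw [h.eq]; exact subset_union_left

theorem GraphOn.mem_edge {X : Type} [TopologicalSpace X] {ι : Type} {V : Set X}
    {e : ι → C(unitInterval, X)} {Y : Set X} (h : GraphOn V e Y) (i : ι) (t) : e i t ∈ Y := by
  rw [h.eq]; exact Or.inr (mem_iUnion.2 ⟨i, t, rfl⟩)

/-- Attach an edge. -/
theorem GraphOn.attach {X : Type} [TopologicalSpace X] {ι : Type} {V : Set X}
    {e : ι → C(unitInterval, X)} {Y : Set X} (h : GraphOn V e Y) (β : C(unitInterval, X))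
    (hβ : Function.Injective β) (hβY : ∀ t, β t ∈ Y → β t ∈ V ∧ (t = 0 ∨ t = 1)) :
    GraphOn (V ∪ {β 0, β 1}) (fun o : Option ι => o.elim β e) (Y ∪ range β) where
  fin := h.fin.union (by simp)
  inj := by rintro (_ | i); exacts [hβ, h.inj i]
  zero_mem := by rintro (_ | i); exacts [Or.inr (Or.inl rfl), Or.inl (h.zero_mem i)]
  one_mem := by rintro (_ | i); exacts [Or.inr (Or.inr rfl), Or.inl (h.one_mem i)]
  int := by
    rintro (_ | i) t (ht | ht | ht)
    · exact (hβY t (h.subset_V ht)).2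
    · exact Or.inl (hβ ht)
    · exact Or.inr (hβ ht)
    · exact h.int i t ht
    · have ht' : e i t = β 0 := ht
      exact h.int i t (ht' ▸ (hβY 0 (ht' ▸ h.mem_edge i t)).1)
    · have ht' : e i t = β 1 := ht
      exact h.int i t (ht' ▸ (hβY 1 (ht' ▸ h.mem_edge i t)).1)
  disj := by
    rintro (_ | i) (_ | j) hij x hx hx'
    · exact absurd rfl hij
    · obtain ⟨t, rfl⟩ := hx
      obtain ⟨t', ht'⟩ := hx'
      exact Or.inl (hβY t (ht' ▸ h.mem_edge j t')).1
    · obtain ⟨t, rfl⟩ := hx'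
      obtain ⟨t', ht'⟩ := hx
      exact Or.inl (hβY t (ht' ▸ h.mem_edge i t')).1
    · exact Or.inl (h.disj i j (fun h => hij (congrArg some h)) x hx hx')
  eq := by
    rw [iUnion_option, h.eq]
    simp only [Option.elim]
    ext x
    simp only [mem_union, mem_insert_iff, mem_singleton_iff]
    constructor
    · tauto
    · rintro ((hx | rfl | rfl) | hx | hx)
      · tauto
      · exact Or.inr ⟨0, rfl⟩
      · exact Or.inr ⟨1, rfl⟩
      · tauto
      · tauto

/-- Remove an edge. -/
theorem GraphOn.remove {X : Type} [TopologicalSpace X] {ι : Type} {V : Set X}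
    {e : ι → C(unitInterval, X)} {Y : Set X} (h : GraphOn V e Y) (i₀ : ι) :
    GraphOn V (fun i : {i // i ≠ i₀} => e i) (V ∪ ⋃ i : {i // i ≠ i₀}, range (e i)) where
  fin := h.fin
  inj := fun i => h.inj i
  zero_mem := fun i => h.zero_mem i
  one_mem := fun i => h.one_mem i
  int := fun i => h.int i
  disj := fun i j hij => h.disj i j fun h => hij (Subtype.ext h)
  eq := rfl

/-- Subdivide so that a point becomes a vertex. -/
theorem GraphOn.subdivide {X : Type} [TopologicalSpace X] {ι : Type} [Finite ι] {V : Set X}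
    {e : ι → C(unitInterval, X)} {Y : Set X} (h : GraphOn V e Y) {y : X} (hy : y ∈ Y) :
    ∃ (V' : Set X) (ι' : Type) (_ : Finite ι') (e' : ι' → C(unitInterval, X)),
      GraphOn V' e' Y ∧ V ⊆ V' ∧ y ∈ V' := by
  classical
  by_cases hyV : y ∈ V
  · exact ⟨V, ι, inferInstance, e, h, subset_rfl, hyV⟩
  have hy' := hy
  rw [h.eq] at hy'
  rcases hy' with hy' | hy'
  · exact absurd hy' hyV
  obtain ⟨i₀, t₀, rfl⟩ := mem_iUnion.1 hy'
  have ht0 : t₀ ≠ 0 := by rintro rfl; exact hyV (h.zero_mem i₀)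
  have ht1 : t₀ ≠ 1 := by rintro rfl; exact hyV (h.one_mem i₀)
  have hle0 : (0 : unitInterval) ≤ t₀ := unitInterval.nonneg'
  have hle1 : t₀ ≤ (1 : unitInterval) := unitInterval.le_one'
  set Y₀ := V ∪ ⋃ i : {i // i ≠ i₀}, range (e i) with hY₀
  have hmem : ∀ s, e i₀ s ∈ Y₀ → e i₀ s ∈ V := by
    rintro s (hs | hs)
    · exact hs
    · obtain ⟨⟨j, hj⟩, hs⟩ := mem_iUnion.1 hs
      exact h.disj j i₀ hj _ hs ⟨s, rfl⟩
  have g1 := (h.remove i₀).attach (subArc (e i₀) 0 t₀) (subArc_injective (h.inj i₀) ht0.symm) (by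
    intro t ht
    have hV := hmem _ ht
    refine ⟨hV, ?_⟩
    rcases h.int _ _ hV with h | h
    · exact Or.inl (convexComb_eq_left ht0.symm h)
    · have := (convexComb_mem hle0 t).2
      rw [h] at this
      exact absurd (le_antisymm hle1 this) ht1)
  have g2 := g1.attach (subArc (e i₀) t₀ 1) (subArc_injective (h.inj i₀) ht1) (by
    rintro t (ht | ht)
    · have hV := hmem _ ht
      refine ⟨Or.inl hV, ?_⟩
      rcases h.int _ _ hV with h | h
      · have := (convexComb_mem hle1 t).1
        rw [h] at this
        exact absurd (le_antisymm this hle0) ht0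
      · exact Or.inr (convexComb_eq_right ht1 h)
    · rw [range_subArc _ hle0] at ht
      obtain ⟨s, hs, hst⟩ := ht
      have hst := h.inj i₀ hst
      have e1 : Icc.convexComb t₀ 1 t = t₀ :=
        le_antisymm (hst ▸ hs.2) (convexComb_mem hle1 t).1
      have := convexComb_eq_left ht1 e1
      refine ⟨?_, Or.inl this⟩
      rw [this]
      exact Or.inr (Or.inr ((subArc_zero _ _ _).trans (subArc_one _ _ _).symm)))
  have hYeq : Y₀ ∪ range (subArc (e i₀) 0 t₀) ∪ range (subArc (e i₀) t₀ 1) = Y := by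
    rw [range_subArc _ hle0, range_subArc _ hle1, union_assoc, ← image_union,
      Icc_union_Icc_eq_Icc hle0 hle1, h.eq]
    have : (e i₀ '' Icc 0 1) = range (e i₀) := by
      rw [← image_univ]
      congr 1
      exact eq_univ_of_forall fun t => ⟨unitInterval.nonneg', unitInterval.le_one'⟩
    rw [this]
    ext x
    simp only [hY₀, mem_union, mem_iUnion]
    constructor
    · rintro ((hx | ⟨i, hx⟩) | hx)
      exacts [Or.inl hx, Or.inr ⟨_, hx⟩, Or.inr ⟨_, hx⟩]
    · rintro (hx | ⟨i, hx⟩)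
      · exact Or.inl (Or.inl hx)
      · by_cases hi : i = i₀
        · subst hi; exact Or.inr hx
        · exact Or.inl (Or.inr ⟨⟨i, hi⟩, hx⟩)
  rw [hYeq] at g2
  refine ⟨_, _, inferInstance, _, g2, subset_union_left.trans subset_union_left, ?_⟩
  refine Or.inr (Or.inl ?_)
  rw [subArc_zero]

theorem homotopic_of_simplyConnected_subset {X : Type} [TopologicalSpace X] {K Y : Set X}
    [SimplyConnectedSpace K] (hKY : K ⊆ Y) {a b : Y} (γ γ' : Path a b)
    (h : ∀ t, (γ t : X) ∈ K) (h' : ∀ t, (γ' t : X) ∈ K) : γ.Homotopic γ' := by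
  have ha : (a : X) ∈ K := by simpa using h 0
  have hb : (b : X) ∈ K := by simpa using h 1
  let p : Path (⟨a, ha⟩ : K) ⟨b, hb⟩ := ⟨⟨fun t => ⟨γ t, h t⟩, by fun_prop⟩,
    Subtype.ext (by simp), Subtype.ext (by simp)⟩
  let p' : Path (⟨a, ha⟩ : K) ⟨b, hb⟩ := ⟨⟨fun t => ⟨γ' t, h' t⟩, by fun_prop⟩,
    Subtype.ext (by simp), Subtype.ext (by simp)⟩
  have hp : p.Homotopic p' := SimplyConnectedSpace.paths_homotopic p p'
  exact hp.map ⟨inclusion hKY, continuous_inclusion hKY⟩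

theorem GraphOn.star {X : Type} [TopologicalSpace X] [T2Space X] {ι : Type} [Finite ι]
    {V : Set X} {e : ι → C(unitInterval, X)} {Y : Set X} (h : GraphOn V e Y) {v : X} (hv : v ∈ V) :
    ∃ U : Set Y, IsOpen U ∧ (⟨v, h.subset_V hv⟩ : Y) ∈ U ∧ ∀ (a b : Y) (γ γ' : Path a b),
      range γ ⊆ U → range γ' ⊆ U → γ.Homotopic γ' := by
  classical
  let hf : unitInterval := ⟨1 / 2, by norm_num, by norm_num⟩
  have hf0 : (0 : unitInterval) ≠ hf := fun h => by
    have := congrArg Subtype.val h; norm_num [hf] at this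
  have hf1 : (1 : unitInterval) ≠ hf := fun h => by
    have := congrArg Subtype.val h; norm_num [hf] at this
  have hl0 : (0 : unitInterval) ≤ hf := unitInterval.nonneg'
  have hl1 : hf ≤ (1 : unitInterval) := unitInterval.le_one'
  let en : Bool → unitInterval := fun b => cond b 1 0
  have hen : ∀ b, en b ≠ hf := by rintro (_ | _); exacts [hf0, hf1]
  let J := {p : ι × Bool // e p.1 (en p.2) = v}
  let k : J → C(unitInterval, X) := fun j => subArc (e j.1.1) (en j.1.2) hf
  have hkr : ∀ j : J, range (k j) ⊆ range (e j.1.1) := by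
    rintro j _ ⟨t, rfl⟩
    exact ⟨_, rfl⟩
  have hkV : ∀ (j : J) x, x ∈ range (k j) → x ∈ V → x = v := by
    rintro ⟨⟨i, b⟩, hj⟩ _ ⟨t, rfl⟩ hx
    have hx' : e i (Icc.convexComb (en b) hf t) ∈ V := hx
    have hj' : e i (en b) = v := hj
    have ht := h.int _ _ hx'
    show e i (Icc.convexComb (en b) hf t) = v
    have hb : Icc.convexComb (en b) hf t = en b := by
      have h0 := t.2.1
      have h1 := t.2.2
      rcases b with _ | _
      · rcases ht with ht | ht
        · exact ht
        · have := (congrArg Subtype.val ht)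
          rw [Icc.coe_convexComb] at this
          simp only [en, hf, cond, Icc.coe_zero, Icc.coe_one] at this
          linarith
      · rcases ht with ht | ht
        · have := (congrArg Subtype.val ht)
          rw [Icc.coe_convexComb] at this
          simp only [en, hf, cond, Icc.coe_zero, Icc.coe_one] at this
          linarith
        · exact ht
    rw [hb, hj']
  have hdisj : ∀ i j, i ≠ j → ∀ x, x ∈ range (k i) → x ∈ range (k j) → x = v := by
    rintro ⟨⟨i, b⟩, hi⟩ ⟨⟨j, b'⟩, hj⟩ hij x hx hx'
    by_cases hij' : i = j
    · subst hij'
      exfalso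
      apply hij
      have hj' : e i (en b') = v := hj
      have := h.inj i (hi.trans hj'.symm)
      apply Subtype.ext
      simp only [Prod.mk.injEq, true_and]
      rcases b with _ | _ <;> rcases b' with _ | _ <;> simp [en] at this ⊢
    · exact hkV ⟨⟨i, b⟩, hi⟩ x hx (h.disj i j hij' x (hkr _ hx) (hkr _ hx'))
  have hcon := cone_contractible v k (fun j => subArc_injective (h.inj _) (hen _))
    (fun j => (subArc_zero _ _ _).trans j.2) hdisj
  set K : Set X := {v} ∪ ⋃ j, range (k j) with hK
  have hKY : K ⊆ Y := by
    rintro x (hx | hx)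
    · have : x = v := hx
      rw [this]; exact h.subset_V hv
    · obtain ⟨j, hj⟩ := mem_iUnion.1 hx
      obtain ⟨t, rfl⟩ := hkr j hj
      exact h.mem_edge _ _
  let P : ι → Set unitInterval := fun i => {t | (e i 0 = v → hf ≤ t) ∧ (e i 1 = v → t ≤ hf)}
  have hP : ∀ i, IsClosed (P i) := by
    intro i
    have e1 : ∀ (p : Prop) (Q : Set unitInterval), IsClosed Q → IsClosed {t | p → t ∈ Q} := by
      intro p Q hQ
      by_cases h : p
      · simp only [h, true_imp_iff]; exact hQ
      · simp only [h, false_imp_iff]; exact isClosed_univ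
    exact (e1 _ (Ici hf) isClosed_Ici).inter (e1 _ (Iic hf) isClosed_Iic)
  let Z : Set X := (V \ {v}) ∪ ⋃ i, e i '' P i
  have hZ : IsClosed Z := by
    apply IsClosed.union
    · exact (h.fin.subset sdiff_subset).isClosed
    · exact isClosed_iUnion_of_finite fun i => ((hP i).isCompact.image (e i).continuous).isClosed
  have hUK : ∀ y ∈ Y, y ∉ Z → y ∈ K := by
    intro y hy hyZ
    rw [h.eq] at hy
    rcases hy with hy | hy
    · left
      by_contra hne
      exact hyZ (Or.inl ⟨hy, hne⟩)
    · obtain ⟨i, t, rfl⟩ := mem_iUnion.1 hy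
      have ht : t ∉ P i := fun ht => hyZ (Or.inr (mem_iUnion.2 ⟨i, t, ht, rfl⟩))
      have ht' : (e i 0 = v ∧ t < hf) ∨ (e i 1 = v ∧ hf < t) := by
        by_contra hcon
        push Not at hcon
        exact ht ⟨hcon.1, hcon.2⟩
      right
      rcases ht' with ⟨h1, h2⟩ | ⟨h1, h2⟩
      · refine mem_iUnion.2 ⟨⟨(i, false), h1⟩, ?_⟩
        show _ ∈ range (subArc (e i) 0 hf)
        rw [range_subArc _ hl0]
        exact ⟨t, ⟨unitInterval.nonneg', h2.le⟩, rfl⟩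
      · refine mem_iUnion.2 ⟨⟨(i, true), h1⟩, ?_⟩
        show _ ∈ range ((⟨e i, rfl, rfl⟩ : Path (e i 0) (e i 1)).subpath 1 hf)
        rw [Path.range_subpath_of_ge _ _ _ hl1]
        exact ⟨t, ⟨h2.le, unitInterval.le_one'⟩, rfl⟩
  refine ⟨Subtype.val ⁻¹' Zᶜ, hZ.isOpen_compl.preimage continuous_subtype_val, ?_, ?_⟩
  · rintro (hx | hx)
    · exact hx.2 rfl
    · obtain ⟨i, t, ht, hx⟩ := mem_iUnion.1 hx
      have hx' : e i t = v := hx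
      rcases h.int i t (hx' ▸ hv) with rfl | rfl
      · exact hf0 (le_antisymm hl0 (ht.1 hx'))
      · exact hf1 (le_antisymm (ht.2 hx') hl1)
  · intro a b γ γ' h1 h2
    exact homotopic_of_simplyConnected_subset hKY γ γ'
      (fun t => hUK _ (γ t).2 (h1 ⟨t, rfl⟩)) (fun t => hUK _ (γ' t).2 (h2 ⟨t, rfl⟩))

/-- Finite graph, with edges indexed by any finite type. -/
def IsGraph {X : Type} [TopologicalSpace X] (Y : Set X) : Prop :=
  ∃ (V : Set X) (ι : Type) (_ : Finite ι) (e : ι → C(unitInterval, X)), GraphOn V e Y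

theorem IsGraph.isFiniteTopGraph {X : Type} [TopologicalSpace X] {Y : Set X} (h : IsGraph Y) :
    IsFiniteTopGraph Y := by
  obtain ⟨V, ι, _, e, h⟩ := h
  obtain ⟨n, ⟨f⟩⟩ := Finite.exists_equiv_fin ι
  refine ⟨h.fin.toFinset, n, fun i => e (f.symm i), fun i => h.inj _, fun i => ?_, fun i t ht => ?_,
    fun i j hij x hx hx' => ?_, ?_⟩
  · simpa using ⟨h.zero_mem _, h.one_mem _⟩
  · exact h.int _ t (by simpa using ht)
  · simpa using h.disj _ _ (fun h => hij (f.symm.injective h)) x hx hx'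
  · rw [h.fin.coe_toFinset, h.eq, ← f.symm.surjective.iUnion_comp]

theorem IsGraph.isCompact {X : Type} [TopologicalSpace X] {Y : Set X} (h : IsGraph Y) :
    IsCompact Y := by
  obtain ⟨V, ι, _, e, h⟩ := h
  exact h.isCompact

theorem IsGraph.locallyPathConnected {X : Type} [TopologicalSpace X] [T2Space X] {Y : Set X}
    (h : IsGraph Y) : LocallyPathConnectedSpace Y := by
  obtain ⟨V, ι, _, e, h⟩ := h
  exact h.locallyPathConnected

theorem IsGraph.exists_smallHtpy {X : Type} [MetricSpace X] {Y : Set X} (h : IsGraph Y) :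
    ∃ δ > 0, SmallHtpy Y δ := by
  have : CompactSpace Y := isCompact_iff_compactSpace.1 h.isCompact
  obtain ⟨V, ι, _, e, h⟩ := h
  apply _root_.exists_smallHtpy
  rintro ⟨y, hy⟩
  obtain ⟨V', ι', _, e', h', -, hyV⟩ := h.subdivide hy
  exact h'.star hyV

theorem IsGraph.exists_smallJoin {X : Type} [MetricSpace X] {Y : Set X} (h : IsGraph Y)
    {ε : ℝ} (hε : 0 < ε) : ∃ δ > 0, SmallJoin Y ε δ := by
  have : CompactSpace Y := isCompact_iff_compactSpace.1 h.isCompact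
  have := h.locallyPathConnected
  exact _root_.exists_smallJoin Y hε

/-- Attach an arc meeting the graph at its initial point and possibly at its end. -/
theorem IsGraph.attach {X : Type} [TopologicalSpace X] {Y : Set X} (h : IsGraph Y)
    (β : C(unitInterval, X)) (hβ : Function.Injective β)
    (hβY : ∀ t, β t ∈ Y → t = 0 ∨ t = 1) : IsGraph (Y ∪ range β) := by
  obtain ⟨V, ι, _, e, h⟩ := h
  have step : ∀ (y : X) (V : Set X) (ι : Type) (_ : Finite ι) (e : ι → C(unitInterval, X)),
      GraphOn V e Y → ∃ (V' : Set X) (ι' : Type) (_ : Finite ι') (e' : ι' → C(unitInterval, X)),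
        GraphOn V' e' Y ∧ V ⊆ V' ∧ (y ∈ Y → y ∈ V') := by
    intro y V ι _ e h
    by_cases hy : y ∈ Y
    · obtain ⟨V', ι', hι, e', h1, h2, h3⟩ := h.subdivide hy
      exact ⟨V', ι', hι, e', h1, h2, fun _ => h3⟩
    · exact ⟨V, ι, inferInstance, e, h, subset_rfl, fun h => absurd h hy⟩
  obtain ⟨V1, ι1, _, e1, h1, -, hm1⟩ := step (β 0) V ι inferInstance e h
  obtain ⟨V2, ι2, _, e2, h2, hs, hm2⟩ := step (β 1) V1 ι1 inferInstance e1 h1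
  refine ⟨_, _, inferInstance, _, h2.attach β hβ ?_⟩
  intro t ht
  refine ⟨?_, hβY t ht⟩
  rcases hβY t ht with rfl | rfl
  · exact hs (hm1 ht)
  · exact hm2 ht

theorem isGraph_singleton {X : Type} [TopologicalSpace X] (x : X) : IsGraph ({x} : Set X) :=
  ⟨{x}, Empty, inferInstance, fun i => i.elim, by
    constructor <;> simp⟩

theorem interval_induction (P : unitInterval → Prop) (h0 : P 0) {η : ℝ} (hη : 0 < η)
    (hstep : ∀ s t : unitInterval, s ≤ t → (t : ℝ) - s < η → P s → P t) : P 1 := by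
  have key : ∀ n : ℕ, P (projIcc 0 1 zero_le_one (n * (η / 2))) := by
    intro n
    induction n with
    | zero => simpa using h0
    | succ n ih =>
      refine hstep _ _ ?_ ?_ ih
      · apply monotone_projIcc
        push_cast
        nlinarith
      · have h1 := abs_projIcc_sub_projIcc (a := (0 : ℝ)) (b := 1) (c := ((n + 1 : ℕ) : ℝ) * (η / 2))
          (d := n * (η / 2)) zero_le_one
        have h2 : ((n + 1 : ℕ) : ℝ) * (η / 2) - n * (η / 2) = η / 2 := by push_cast; ring
        rw [h2, abs_of_pos (half_pos hη)] at h1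
        have := (le_abs_self _).trans h1
        linarith
  obtain ⟨n, hn⟩ := exists_nat_gt (1 / (η / 2))
  have h := key n
  rw [projIcc_of_right_le] at h
  · exact h
  · rw [div_lt_iff₀ (half_pos hη)] at hn
    exact hn.le

/-- The path is homotopic into `Y`. -/
def Carried {X : Type} [TopologicalSpace X] (Y : Set X) {a b : X} (γ : Path a b) : Prop :=
  ∃ γ' : Path a b, range γ' ⊆ Y ∧ γ.Homotopic γ'

theorem Carried.mono {X : Type} [TopologicalSpace X] {Y Y' : Set X} {a b : X} {γ : Path a b}
    (h : Carried Y γ) (hY : Y ⊆ Y') : Carried Y' γ := by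
  obtain ⟨γ', h1, h2⟩ := h
  exact ⟨γ', h1.trans hY, h2⟩

theorem Carried.right_mem {X : Type} [TopologicalSpace X] {Y : Set X} {a b : X} {γ : Path a b}
    (h : Carried Y γ) : b ∈ Y := by
  obtain ⟨γ', h1, -⟩ := h
  simpa using h1 ⟨1, rfl⟩

theorem Carried.congr {X : Type} [TopologicalSpace X] {Y : Set X} {a b : X} {γ γ₁ : Path a b}
    (h : Carried Y γ) (hh : γ₁.Homotopic γ) : Carried Y γ₁ := by
  obtain ⟨γ', h1, h2⟩ := h
  exact ⟨γ', h1, hh.trans h2⟩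

theorem Carried.sub_trans {X : Type} [TopologicalSpace X] {Y : Set X} {a b : X} {γ : Path a b}
    {r s t : unitInterval} (h : Carried Y (γ.subpath r s)) (h' : Carried Y (γ.subpath s t)) :
    Carried Y (γ.subpath r t) := by
  obtain ⟨γ1, h1, h2⟩ := h
  obtain ⟨γ2, h3, h4⟩ := h'
  refine ⟨γ1.trans γ2, ?_, ?_⟩
  · rw [Path.trans_range]
    exact union_subset h1 h3
  · have : ((γ.subpath r s).trans (γ.subpath s t)).Homotopic (γ.subpath r t) :=
      ⟨Path.Homotopy.subpathTransSubpath γ r s t⟩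
    exact this.symm.trans (h2.hcomp h4)

theorem Carried.of_cast {X : Type} [TopologicalSpace X] {Y : Set X} {a b a' b' : X} {γ : Path a b}
    (ha : a' = a) (hb : b' = b) (h : Carried Y (γ.cast ha hb)) : Carried Y γ := by
  subst ha hb
  exact h

theorem Carried.of_subpath {X : Type} [TopologicalSpace X] {Y : Set X} {a b : X} {γ : Path a b}
    (h : Carried Y (γ.subpath 0 1)) : Carried Y γ := by
  rw [Path.subpath_zero_one] at h
  exact Carried.of_cast _ _ h

theorem Carried.of_range {X : Type} [TopologicalSpace X] {Y : Set X} {a b : X} {γ : Path a b}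
    (h : range γ ⊆ Y) : Carried Y γ := ⟨γ, h, Path.Homotopic.refl γ⟩

/-- A uniform modulus for small subpaths. -/
theorem Path.exists_small {X : Type} [MetricSpace X] {a b : X} (γ : Path a b) {ε : ℝ} (hε : 0 < ε) :
    ∃ η > 0, ∀ s t : unitInterval, s ≤ t → (t : ℝ) - s < η → ∀ u ∈ Icc s t, ∀ v ∈ Icc s t,
      dist (γ u) (γ v) < ε := by
  have huc := CompactSpace.uniformContinuous_of_continuous γ.continuous
  rw [Metric.uniformContinuous_iff] at huc
  obtain ⟨η, hη, h⟩ := huc ε hε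
  refine ⟨η, hη, fun s t hst hd u hu v hv => h ?_⟩
  rw [Subtype.dist_eq]
  exact lt_of_le_of_lt (Real.dist_le_of_mem_Icc (x' := (s:ℝ)) (y' := (t:ℝ)) ⟨hu.1, hu.2⟩
          ⟨hv.1, hv.2⟩) hd

theorem carry_arc {X : Type} [MetricSpace X] {δ : ℝ} (hδ : 0 < δ) (hX : SmallHtpy X δ)
    {Y : Set X} (hY : IsGraph Y) (hYp : IsPathConnected Y) {a b : X} (ha : a ∈ Y) (α : Path a b)
    (hα : Function.Injective α) :
    ∃ Y', Y ⊆ Y' ∧ IsGraph Y' ∧ IsPathConnected Y' ∧ Carried Y' α := by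
  obtain ⟨ζ, hζ, hJ⟩ := hY.exists_smallJoin hδ
  obtain ⟨η, hη, hsm⟩ := α.exists_small (lt_min hζ hδ)
  let P : unitInterval → Prop := fun t => ∃ Y', Y ⊆ Y' ∧ IsGraph Y' ∧ IsPathConnected Y' ∧
    Carried Y' (α.subpath 0 t) ∧ Y' ⊆ Y ∪ α '' Iic t
  have hA : ∀ s t : unitInterval, s ≤ t → (∀ u ∈ Ioo s t, α u ∉ Y) → P s → P t := by
    intro s t hst hu hP
    rcases hst.eq_or_lt with rfl | hst'
    · exact hP
    obtain ⟨Y', h1, h2, h3, h4, h5⟩ := hP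
    have hr : range (subArc α.toContinuousMap s t) = α '' Icc s t := range_subArc _ hst
    refine ⟨Y' ∪ range (subArc α.toContinuousMap s t), h1.trans subset_union_left,
      h2.attach _ (subArc_injective hα hst'.ne) ?_, ?_, ?_, ?_⟩
    · intro r hr
      have hr : α (Icc.convexComb s t r) ∈ Y' := hr
      have hm := convexComb_mem hst r
      rcases h5 hr with h | ⟨w, hw, hwe⟩
      · by_contra hcon
        push Not at hcon
        refine hu _ ⟨lt_of_le_of_ne hm.1 fun h => ?_, lt_of_le_of_ne hm.2 fun h => ?_⟩ h
        · exact hcon.1 (convexComb_eq_left hst'.ne h.symm)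
        · exact hcon.2 (convexComb_eq_right hst'.ne h)
      · left
        have := hα hwe
        exact convexComb_eq_left hst'.ne (le_antisymm (this ▸ hw) hm.1)
    · have : PathConnectedSpace unitInterval := isPathConnected_iff_pathConnectedSpace.1
        ((convex_Icc (0 : ℝ) 1).isPathConnected ⟨0, by simp⟩)
      refine h3.union (isPathConnected_range (ContinuousMap.continuous _)) ⟨α s, h4.right_mem, 0, ?_⟩
      exact subArc_zero _ _ _
    · refine (h4.mono subset_union_left).sub_trans (Carried.of_range ?_)
      rw [Path.range_subpath_of_le _ _ _ hst, hr]
      exact subset_union_right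
    · apply union_subset
      · exact h5.trans (union_subset_union_right _ (image_mono (Iic_subset_Iic.2 hst)))
      · rw [hr]
        exact (image_mono fun u hu => hu.2).trans subset_union_right
  have hB : ∀ p q : unitInterval, p ≤ q → (q : ℝ) - p < η → α p ∈ Y → α q ∈ Y → P p → P q := by
    rintro p q hpq hd hp hq ⟨Y', h1, h2, h3, h4, h5⟩
    refine ⟨Y', h1, h2, h3, h4.sub_trans ?_,
      h5.trans (union_subset_union_right _ (image_mono (Iic_subset_Iic.2 hpq)))⟩
    obtain ⟨c, hc⟩ := hJ ⟨α p, hp⟩ ⟨α q, hq⟩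
      ((hsm p q hpq hd p ⟨le_rfl, hpq⟩ q ⟨hpq, le_rfl⟩).trans_le (min_le_left _ _))
    refine ⟨c.map continuous_subtype_val, ?_, ?_⟩
    · rintro _ ⟨t, rfl⟩
      exact h1 (c t).2
    · refine hX (α p) _ _ _ _ ?_ ?_
      · rw [Path.range_subpath_of_le _ _ _ hpq]
        rintro _ ⟨u, hu, rfl⟩
        exact (hsm p q hpq hd u hu p ⟨le_rfl, hpq⟩).trans_le (min_le_right _ _)
      · rintro _ ⟨t, rfl⟩
        exact hc ⟨t, rfl⟩
  have h1 : P 1 := by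
    apply interval_induction P _ hη
    · intro s t hst hd hP
      by_cases hH : (Icc s t ∩ α ⁻¹' Y).Nonempty
      · have hc : IsCompact (Icc s t ∩ α ⁻¹' Y) :=
          (isClosed_Icc.inter (hY.isCompact.isClosed.preimage α.continuous)).isCompact
        obtain ⟨p, hp⟩ := hc.exists_isLeast hH
        obtain ⟨q, hq⟩ := hc.exists_isGreatest hH
        have hpq : p ≤ q := hp.2 hq.1
        have i1 : (s : ℝ) ≤ p := hp.1.1.1
        have i2 : (q : ℝ) ≤ t := hq.1.1.2
        refine hA q t hq.1.1.2 ?_ (hB p q hpq (by linarith) hp.1.2 hq.1.2 (hA s p hp.1.1.1 ?_ hP))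
        · intro u hu huY
          exact absurd (hq.2 ⟨⟨hq.1.1.1.trans hu.1.le, hu.2.le⟩, huY⟩) (not_le.2 hu.1)
        · intro u hu huY
          exact absurd (hp.2 ⟨⟨hu.1.le, hu.2.le.trans hp.1.1.2⟩, huY⟩) (not_le.2 hu.2)
      · refine hA s t hst ?_ hP
        intro u hu huY
        exact hH ⟨u, ⟨hu.1.le, hu.2.le⟩, huY⟩
    · refine ⟨Y, subset_rfl, hY, hYp, Carried.of_range ?_, subset_union_left⟩
      rw [Path.range_subpath_of_le _ _ _ le_rfl]
      rintro _ ⟨u, hu, rfl⟩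
      have : u = 0 := le_antisymm hu.2 hu.1
      rw [this, α.source]
      exact ha
  obtain ⟨Y', h1, h2, h3, h4, -⟩ := h1
  exact ⟨Y', h1, h2, h3, h4.of_subpath⟩

theorem carry_path {X : Type} [MetricSpace X] [CompactSpace X] {δ : ℝ} (hδ : 0 < δ)
    (hX : SmallHtpy X δ)
    {Y : Set X} (hY : IsGraph Y) (hYp : IsPathConnected Y) {a b : X} (ha : a ∈ Y) (γ : Path a b) :
    ∃ Y', Y ⊆ Y' ∧ IsGraph Y' ∧ IsPathConnected Y' ∧ Carried Y' γ := by
  obtain ⟨η, hη, hsm⟩ := γ.exists_small hδ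
  let P : unitInterval → Prop := fun t => ∃ Y', Y ⊆ Y' ∧ IsGraph Y' ∧ IsPathConnected Y' ∧
    Carried Y' (γ.subpath 0 t)
  have h1 : P 1 := by
    apply interval_induction P _ hη
    · rintro s t hst hd ⟨Y', h1, h2, h3, h4⟩
      have hr : range (γ.subpath s t) ⊆ Metric.ball (γ s) δ := by
        rw [Path.range_subpath_of_le _ _ _ hst]
        rintro _ ⟨u, hu, rfl⟩
        exact hsm s t hst hd u hu s ⟨le_rfl, hst⟩
      by_cases he : γ s = γ t
      · refine ⟨Y', h1, h2, h3, h4.sub_trans ⟨(Path.refl (γ s)).cast rfl he.symm, ?_, ?_⟩⟩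
        · rintro _ ⟨u, rfl⟩
          exact h4.right_mem
        · refine hX (γ s) _ _ _ _ hr ?_
          rintro _ ⟨u, rfl⟩
          exact Metric.mem_ball_self hδ
      · obtain ⟨α, hα, hαr⟩ := exists_arc_of_path he (γ.subpath s t)
        obtain ⟨Y'', g1, g2, g3, g4⟩ := carry_arc hδ hX h2 h3 h4.right_mem α hα
        exact ⟨Y'', h1.trans g1, g2, g3, (h4.mono g1).sub_trans
          (g4.congr (hX (γ s) _ _ _ _ hr (hαr.trans hr)))⟩
    · refine ⟨Y, subset_rfl, hY, hYp, Carried.of_range ?_⟩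
      rw [Path.range_subpath_of_le _ _ _ le_rfl]
      rintro _ ⟨u, hu, rfl⟩
      have : u = 0 := le_antisymm hu.2 hu.1
      rw [this, γ.source]
      exact ha
  obtain ⟨Y', h1, h2, h3, h4⟩ := h1
  exact ⟨Y', h1, h2, h3, h4.of_subpath⟩

/-- A class in the fundamental group represented by a loop in `Y`. -/
def InSub {X : Type} [TopologicalSpace X] {x₀ : X} (Y : Set X) (g : FundamentalGroup X x₀) : Prop :=
  ∃ γ : Path x₀ x₀, range γ ⊆ Y ∧ Path.Homotopic.Quotient.mk γ = g

theorem exists_graph_carrying {X : Type} [MetricSpace X] [CompactSpace X] {δ : ℝ} (hδ : 0 < δ)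
    (hX : SmallHtpy X δ) (x₀ : X) (S : Finset (FundamentalGroup X x₀)) :
    ∃ Y : Set X, x₀ ∈ Y ∧ IsGraph Y ∧ IsPathConnected Y ∧ ∀ g ∈ S, InSub Y g := by
  classical
  induction S using Finset.induction_on with
  | empty => exact ⟨{x₀}, rfl, isGraph_singleton x₀, isPathConnected_singleton x₀, by simp⟩
  | insert g S hg ih =>
    obtain ⟨Y, h0, h1, h2, h3⟩ := ih
    obtain ⟨γ, hγ⟩ := Path.Homotopic.Quotient.mk_surjective g
    obtain ⟨Y', g1, g2, g3, γ', g4, g5⟩ := carry_path hδ hX h1 h2 h0 γ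
    refine ⟨Y', g1 h0, g2, g3, ?_⟩
    intro k hk
    rcases Finset.mem_insert.1 hk with rfl | hk
    · exact ⟨γ', g4, (Path.Homotopic.Quotient.eq.2 g5).symm.trans hγ⟩
    · obtain ⟨c, c1, c2⟩ := h3 k hk
      exact ⟨c, c1.trans g1, c2⟩

/-- A one-dimensional Peano continuum with finitely generated fundamental group and a
simply connected covering space contains a finite subgraph whose inclusion induces an
isomorphism on fundamental groups. -/
theorem stmt_11 {X : Type} [MetricSpace X] [CompactSpace X] [ConnectedSpace X]
    [LocallyConnectedSpace X] (hdim : CovDimLE X 1)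
    (hcov : ∃ (E : Type) (tE : TopologicalSpace E) (p : E → X),
      @IsCoveringMap E X tE _ p ∧ @SimplyConnectedSpace E tE)
    (x₀ : X) (hfg : Group.FG (FundamentalGroup X x₀)) :
    ∃ Y : Set X, IsFiniteTopGraph Y ∧ ∃ hx₀ : x₀ ∈ Y,
      (∀ γ : Path x₀ x₀, ∃ γ' : Path (⟨x₀, hx₀⟩ : Y) (⟨x₀, hx₀⟩ : Y),
        γ.Homotopic (γ'.map continuous_subtype_val)) ∧
      (∀ γ γ' : Path (⟨x₀, hx₀⟩ : Y) (⟨x₀, hx₀⟩ : Y),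
        (γ.map continuous_subtype_val).Homotopic (γ'.map continuous_subtype_val) →
          γ.Homotopic γ') := by
  obtain ⟨δ, hδ, hX⟩ := covering_smallHtpy hcov
  obtain ⟨S, hS⟩ := hfg.out
  obtain ⟨Y, hx₀, hY, hYp, hYS⟩ := exists_graph_carrying hδ hX x₀ S
  have hall : ∀ g : FundamentalGroup X x₀, InSub Y g := by
    intro g
    have hg : g ∈ Subgroup.closure (S : Set (FundamentalGroup X x₀)) := by rw [hS]; trivial
    induction hg using Subgroup.closure_induction with
    | mem x hx => exact hYS x hx
    | one =>
      refine ⟨Path.refl x₀, ?_, rfl⟩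
      rintro _ ⟨t, rfl⟩
      exact hx₀
    | mul x y _ _ hx hy =>
      obtain ⟨p, hp, rfl⟩ := hx
      obtain ⟨q, hq, rfl⟩ := hy
      refine ⟨q.trans p, ?_, rfl⟩
      rw [Path.trans_range]
      exact union_subset hq hp
    | inv x _ hx =>
      obtain ⟨p, hp, rfl⟩ := hx
      refine ⟨p.symm, ?_, rfl⟩
      rw [Path.symm_range]
      exact hp
  refine ⟨Y, hY.isFiniteTopGraph, hx₀, ?_, ?_⟩
  · intro γ
    obtain ⟨p, hp, hpe⟩ := hall (Path.Homotopic.Quotient.mk γ)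
    refine ⟨⟨⟨fun t => ⟨p t, hp ⟨t, rfl⟩⟩, by fun_prop⟩, Subtype.ext (by simp), Subtype.ext (by simp)⟩,
      ?_⟩
    exact (Path.Homotopic.Quotient.eq.1 hpe).symm
  · intro γ γ' h
    have : PathConnectedSpace Y := isPathConnected_iff_pathConnectedSpace.1 hYp
    obtain ⟨δ₂, h2, hH⟩ := hY.exists_smallHtpy
    obtain ⟨δ₃, h3, hJ⟩ := hY.exists_smallJoin (show 0 < δ₂ / 4 by linarith)
    exact inclusion_injective hdim Y h2 h3 hH hJ _ γ γ' h
end
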